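/- arXiv:2005.08175 — 2 statements merged into one kernel-verified Lean document; each statement's English description precedes it below -/
import Mathlib

section
/- Let V be an irreducible integrable 𝔏(A)-module with finite-dimensional weight spaces on which the affine center K⊗1 acts trivially. Then K⊗a acts trivially on V for every a ∈ A, i.e. (K⊗A)·V = 0. -/
noncomputable section

/-!
Common setup: a realization of the loop affine-Virasoro algebra
`𝔏(A) = ((g̊ ⊗ ℂ[t,t⁻¹] ⊕ ℂK) ⋊ Vir) ⊗ A`.

* `g` plays the role of the finite dimensional simple Lie algebra `g̊`.
* `A` is a commutative associative unital `ℂ`-algebra.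
* `L` plays the role of `𝔏(A)`; the structure fields record the generators
  `E n x a = (x ⊗ tⁿ) ⊗ a`, `D n a = dₙ ⊗ a`, `K a = K ⊗ a`, `C a = C ⊗ a`
  together with the defining bracket relations, and the fact that the
  generators span `L`.
-/

/-- An ideal of a `ℂ`-algebra is cofinite if the quotient is finite dimensional. -/
def IsCofiniteIdeal {A : Type*} [CommRing A] [Algebra ℂ A] (I : Ideal A) : Prop :=
  FiniteDimensional ℂ (A ⧸ I)

/-- A realization of the loop affine-Virasoro algebra `𝔏(A)`. -/
structure LoopAffVir (g : Type*) [LieRing g] [LieAlgebra ℂ g]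
    (A : Type*) [CommRing A] [Algebra ℂ A]
    (L : Type*) [LieRing L] [LieAlgebra ℂ L] : Type _ where
  /-- the Cartan subalgebra `h̊` of `g̊` -/
  H : LieSubalgebra ℂ g
  isCartan : H.IsCartanSubalgebra
  /-- the invariant nondegenerate symmetric bilinear form on `g̊` -/
  form : g →ₗ[ℂ] g →ₗ[ℂ] ℂ
  form_symm : ∀ x y : g, form x y = form y x
  form_nondeg : ∀ x : g, (∀ y : g, form x y = 0) → x = 0
  form_invariant : ∀ x y z : g, form ⁅x, y⁆ z = form x ⁅y, z⁆
  /-- the root space `g̊_α` -/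
  rootSp : Module.Dual ℂ H → Submodule ℂ g
  rootSp_def : ∀ (α : Module.Dual ℂ H) (x : g),
      x ∈ rootSp α ↔ ∀ h : H, ⁅(h : g), x⁆ = α h • x
  /-- a choice of positive roots `Δ̊₊` -/
  Δplus : Set (Module.Dual ℂ H)
  Δplus_root : ∀ α ∈ Δplus, α ≠ 0 ∧ rootSp α ≠ ⊥
  Δplus_cover : ∀ α : Module.Dual ℂ H, α ≠ 0 → rootSp α ≠ ⊥ → α ∈ Δplus ∨ -α ∈ Δplus
  Δplus_disj : ∀ α ∈ Δplus, -α ∉ Δplus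
  /-- `E n x a = (x ⊗ tⁿ) ⊗ a` -/
  E : ℤ → g →ₗ[ℂ] A →ₗ[ℂ] L
  /-- `D n a = dₙ ⊗ a` -/
  D : ℤ → A →ₗ[ℂ] L
  /-- `K a = K ⊗ a` (affine center) -/
  K : A →ₗ[ℂ] L
  /-- `C a = C ⊗ a` (Virasoro center) -/
  C : A →ₗ[ℂ] L
  lie_EE : ∀ (n m : ℤ) (x y : g) (a b : A),
      ⁅E n x a, E m y b⁆ = E (n + m) ⁅x, y⁆ (a * b)
        + (if m = -n then (n : ℂ) * form x y else 0) • K (a * b)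
  lie_DE : ∀ (n m : ℤ) (x : g) (a b : A),
      ⁅D n a, E m x b⁆ = (m : ℂ) • E (m + n) x (a * b)
  lie_DD : ∀ (n m : ℤ) (a b : A),
      ⁅D n a, D m b⁆ = ((m : ℂ) - (n : ℂ)) • D (n + m) (a * b)
        + (if m = -n then (((n : ℂ) ^ 3 - (n : ℂ)) / 12) else 0) • C (a * b)
  K_central : ∀ (a : A) (z : L), ⁅K a, z⁆ = 0
  C_central : ∀ (a : A) (z : L), ⁅C a, z⁆ = 0
  span_top : Submodule.span ℂ
      ({z : L | ∃ (n : ℤ) (x : g) (a : A), z = E n x a}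
        ∪ {z : L | ∃ (n : ℤ) (a : A), z = D n a}
        ∪ {z : L | ∃ a : A, z = K a}
        ∪ {z : L | ∃ a : A, z = C a}) = ⊤

namespace LoopAffVir

variable {g A L : Type*} [LieRing g] [LieAlgebra ℂ g] [CommRing A] [Algebra ℂ A]
  [LieRing L] [LieAlgebra ℂ L] (S : LoopAffVir g A L)

/-- Generators of the Cartan subalgebra `h̄ = h̊ ⊕ ℂK ⊕ ℂd₀ ⊕ ℂC ⊆ 𝔏 ⊗ 1`. -/
def cartanSet : Set L :=
  {z : L | ∃ h ∈ S.H, z = S.E 0 h 1} ∪ {S.K 1, S.D 0 1, S.C 1}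

/-- The Cartan subalgebra `h̄` of `𝔏(A)`. -/
def cartan : Submodule ℂ L := Submodule.span ℂ S.cartanSet

/-- `h ∈ h̊` as an element of `h̄`. -/
def eH (h : S.H) : S.cartan :=
  ⟨S.E 0 h 1, Submodule.subset_span (Set.mem_union_left _ ⟨(h : g), h.2, rfl⟩)⟩

/-- `K ⊗ 1` as an element of `h̄`. -/
def K1 : S.cartan :=
  ⟨S.K 1, Submodule.subset_span (Set.mem_union_right _ (by simp))⟩

/-- `d₀ ⊗ 1` as an element of `h̄`. -/
def d0 : S.cartan :=
  ⟨S.D 0 1, Submodule.subset_span (Set.mem_union_right _ (by simp))⟩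

/-- `C ⊗ 1` as an element of `h̄`. -/
def C1 : S.cartan :=
  ⟨S.C 1, Submodule.subset_span (Set.mem_union_right _ (by simp))⟩

variable (V : Type*) [AddCommGroup V] [Module ℂ V] [LieRingModule L V] [LieModule ℂ L V]

/-- The weight space of an `𝔏(A)`-module attached to `χ ∈ h̄*`. -/
def wtSpace (χ : Module.Dual ℂ S.cartan) : Submodule ℂ V where
  carrier := {v : V | ∀ h : S.cartan, ⁅(h : L), v⁆ = χ h • v}
  add_mem' := by
    intro a b ha hb h
    rw [lie_add, ha h, hb h, smul_add]
  zero_mem' := by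
    intro h
    rw [lie_zero, smul_zero]
  smul_mem' := by
    intro c v hv h
    rw [lie_smul, hv h, smul_comm]

/-- The set of weights `P(V)`. -/
def weights : Set (Module.Dual ℂ S.cartan) := {χ | S.wtSpace V χ ≠ ⊥}

/-- `V` is a weight module: it is the (direct) sum of its weight spaces. -/
def IsWeightModule : Prop := (⨆ χ : Module.Dual ℂ S.cartan, S.wtSpace V χ) = ⊤

/-- All weight spaces are finite dimensional. -/
def HasFinDimWeightSpaces : Prop :=
  ∀ χ : Module.Dual ℂ S.cartan, FiniteDimensional ℂ (S.wtSpace V χ)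

/-- Integrability: `V` is a weight module with finite dimensional weight spaces on which all
real root vectors `(x ⊗ tⁿ) ⊗ a`, `x ∈ g̊_α`, `α ∈ Δ̊`, act locally nilpotently. -/
def IsIntegrable : Prop :=
  S.IsWeightModule V ∧ S.HasFinDimWeightSpaces V ∧
    ∀ α : Module.Dual ℂ S.H, α ≠ 0 → S.rootSp α ≠ ⊥ →
      ∀ x ∈ S.rootSp α, ∀ (n : ℤ) (a : A) (v : V),
        ∃ N : ℕ, ((LieModule.toEnd ℂ L V) (S.E n x a) ^ N) v = 0

/-- The highest weight space
`M = {v ∈ V : (x ⊗ tⁿ ⊗ a) v = 0 ∀ x ∈ g̊_α, α ∈ Δ̊₊, n ∈ ℤ, a ∈ A}` for the second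
triangular decomposition. -/
def hwSpace : Submodule ℂ V where
  carrier := {v : V | ∀ α ∈ S.Δplus, ∀ x ∈ S.rootSp α, ∀ (n : ℤ) (a : A), ⁅S.E n x a, v⁆ = 0}
  add_mem' := by
    intro u w hu hw α hα x hx n a
    rw [lie_add, hu α hα x hx n a, hw α hα x hx n a, add_zero]
  zero_mem' := by
    intro α hα x hx n a
    rw [lie_zero]
  smul_mem' := by
    intro t v hv α hα x hx n a
    rw [lie_smul, hv α hα x hx n a, smul_zero]

/-- Generators of `𝔏(A)⁺ = (n₊ ⊕ Vir⁺) ⊗ A` for the natural triangular decomposition. -/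
def plusSet : Set L :=
  {z : L | ∃ n : ℤ, 0 < n ∧ ∃ (x : g) (a : A), z = S.E n x a} ∪
  {z : L | ∃ α ∈ S.Δplus, ∃ x ∈ S.rootSp α, ∃ a : A, z = S.E 0 x a} ∪
  {z : L | ∃ n : ℤ, 0 < n ∧ ∃ a : A, z = S.D n a}

/-- Generators of `𝔏(A)⁻ = (n₋ ⊕ Vir⁻) ⊗ A` for the natural triangular decomposition. -/
def minusSet : Set L :=
  {z : L | ∃ n : ℤ, n < 0 ∧ ∃ (x : g) (a : A), z = S.E n x a} ∪
  {z : L | ∃ α ∈ S.Δplus, ∃ x ∈ S.rootSp (-α), ∃ a : A, z = S.E 0 x a} ∪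
  {z : L | ∃ n : ℤ, n < 0 ∧ ∃ a : A, z = S.D n a}

/-- Generators of `𝔏(A)⁰ = h̄ ⊗ A`. -/
def cartanASet : Set L :=
  {z : L | ∃ h ∈ S.H, ∃ a : A, z = S.E 0 h a} ∪ {z : L | ∃ a : A, z = S.K a}
    ∪ {z : L | ∃ a : A, z = S.D 0 a} ∪ {z : L | ∃ a : A, z = S.C a}

/-- `𝔏(A)⁰ = h̄ ⊗ A` as a subspace of `L`. -/
def cartanA : Submodule ℂ L := Submodule.span ℂ S.cartanASet

/-- `h ⊗ a`, `h ∈ h̊`, as an element of `h̄ ⊗ A`. -/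
def eHA (h : S.H) (a : A) : S.cartanA :=
  ⟨S.E 0 h a, Submodule.subset_span
    (Set.mem_union_left _ (Set.mem_union_left _ (Set.mem_union_left _ ⟨(h : g), h.2, a, rfl⟩)))⟩

/-- `K ⊗ a` as an element of `h̄ ⊗ A`. -/
def KA (a : A) : S.cartanA :=
  ⟨S.K a, Submodule.subset_span
    (Set.mem_union_left _ (Set.mem_union_left _ (Set.mem_union_right _ ⟨a, rfl⟩)))⟩

/-- `d₀ ⊗ a` as an element of `h̄ ⊗ A`. -/
def DA0 (a : A) : S.cartanA :=
  ⟨S.D 0 a, Submodule.subset_span (Set.mem_union_left _ (Set.mem_union_right _ ⟨a, rfl⟩))⟩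

/-- `C ⊗ a` as an element of `h̄ ⊗ A`. -/
def CA (a : A) : S.cartanA :=
  ⟨S.C a, Submodule.subset_span (Set.mem_union_right _ ⟨a, rfl⟩)⟩

/-- `V` is a highest weight module with highest weight `ψ : h̄ ⊗ A → ℂ` for the natural
triangular decomposition: some nonzero vector `v` is annihilated by `𝔏(A)⁺`, is a
`ψ`-eigenvector for `h̄ ⊗ A`, and generates `V`. -/
def IsHWModule (ψ : Module.Dual ℂ S.cartanA) : Prop :=
  ∃ v : V, v ≠ 0 ∧ (∀ z ∈ S.plusSet, ⁅z, v⁆ = 0) ∧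
    (∀ h : S.cartanA, ⁅(h : L), v⁆ = ψ h • v) ∧
    ∀ W : LieSubmodule ℂ L V, v ∈ W → W = ⊤

/-- `(𝔏 ⊗ I) ⬝ V = 0`. -/
def Annihilates (I : Ideal A) : Prop :=
  ∀ a ∈ I, (∀ (n : ℤ) (x : g) (v : V), ⁅S.E n x a, v⁆ = 0) ∧
    (∀ (n : ℤ) (v : V), ⁅S.D n a, v⁆ = 0) ∧
    (∀ v : V, ⁅S.K a, v⁆ = 0) ∧ (∀ v : V, ⁅S.C a, v⁆ = 0)

/-- `(𝔏₀ ⊗ R)` kills the subspace `X`, where `𝔏₀ = (h̊ ⊗ ℂ[t,t⁻¹] ⊕ ℂK) ⋊ Vir`. -/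
def ZeroPartAnnOn (R : Ideal A) (X : Submodule ℂ V) : Prop :=
  ∀ a ∈ R, ∀ v ∈ X,
    (∀ (n : ℤ) (h : g), h ∈ S.H → ⁅S.E n h a, v⁆ = 0) ∧
    (∀ n : ℤ, ⁅S.D n a, v⁆ = 0) ∧ ⁅S.K a, v⁆ = 0 ∧ ⁅S.C a, v⁆ = 0

/-- Generators of `𝔏(A)₀ = ((h̊ ⊗ ℂ[t,t⁻¹] ⊕ ℂK) ⋊ Vir) ⊗ A`. -/
def zeroPartSet : Set L :=
  {z : L | ∃ (n : ℤ) (h : g), h ∈ S.H ∧ ∃ a : A, z = S.E n h a}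
    ∪ {z : L | ∃ a : A, z = S.K a}
    ∪ {z : L | ∃ (n : ℤ) (a : A), z = S.D n a}
    ∪ {z : L | ∃ a : A, z = S.C a}

/-- Generators of `g(A) = (g̊ ⊗ ℂ[t,t⁻¹] ⊕ ℂK ⊕ ℂd₀) ⊗ A`. -/
def gASet : Set L :=
  {z : L | ∃ (n : ℤ) (x : g) (a : A), z = S.E n x a}
    ∪ {z : L | ∃ a : A, z = S.K a} ∪ {z : L | ∃ a : A, z = S.D 0 a}

/-- Generators of `(h̊ ⊗ ℂ[t,t⁻¹] ⊕ ℂK) ⊗ A`. -/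
def heisSet : Set L :=
  {z : L | ∃ (n : ℤ) (h : g), h ∈ S.H ∧ ∃ a : A, z = S.E n h a}
    ∪ {z : L | ∃ a : A, z = S.K a}

/-- The smallest subspace of `V` containing `X` and stable under the operators in `Ops`;
this models `U(⋯) ⬝ X`. -/
def opClosure (Ops : Set L) (X : Submodule ℂ V) : Submodule ℂ V :=
  sInf {N : Submodule ℂ V | X ≤ N ∧ ∀ z ∈ Ops, ∀ v ∈ N, ⁅z, v⁆ ∈ N}

/-- The reflection `λ ↦ λ - λ(b) • β` on `h̄*`. -/
def reflMap (b : S.cartan) (β : Module.Dual ℂ S.cartan) :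
    Module.End ℂ (Module.Dual ℂ S.cartan) :=
  LinearMap.id - LinearMap.smulRight (Module.Dual.eval ℂ S.cartan b) β

/-- Given `ν⁻¹ : h̊* → h̊` (inverse of the form), the coroot
`β∨ = α∨ + (2 / ⟨α,α⟩) K ∈ h̄` of the real root `β = α + nδ`. -/
def corootOf (nu : Module.Dual ℂ S.H → S.H) (α : Module.Dual ℂ S.H) : S.cartan :=
  (2 / α (nu α)) • (S.eH (nu α) + S.K1)

/-- The (affine) Weyl group `W` of `𝔏(A)`, generated by the reflections in the real
roots `β = α + nδ`, acting on `h̄*`. -/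
def weylMonoid (nu : Module.Dual ℂ S.H → S.H)
    (ext : Module.Dual ℂ S.H →ₗ[ℂ] Module.Dual ℂ S.cartan)
    (δf : Module.Dual ℂ S.cartan) :
    Submonoid (Module.End ℂ (Module.Dual ℂ S.cartan)) :=
  Submonoid.closure {w | ∃ (α : Module.Dual ℂ S.H) (n : ℤ), α ≠ 0 ∧ S.rootSp α ≠ ⊥ ∧
    w = S.reflMap (S.corootOf nu α) (ext α + (n : ℂ) • δf)}

/-- The reflection `σ_α : h ↦ h - α(h) • α∨` on `h̊`. -/
def finReflMap (nu : Module.Dual ℂ S.H → S.H) (α : Module.Dual ℂ S.H) :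
    Module.End ℂ S.H :=
  LinearMap.id - LinearMap.smulRight (α : S.H →ₗ[ℂ] ℂ) ((2 / α (nu α)) • nu α)

/-- The finite Weyl group `W̊` of `g̊`, acting on `h̊`. -/
def finWeyl (nu : Module.Dual ℂ S.H → S.H) : Submonoid (Module.End ℂ S.H) :=
  Submonoid.closure {w | ∃ α : Module.Dual ℂ S.H, α ≠ 0 ∧ S.rootSp α ≠ ⊥ ∧
    w = S.finReflMap nu α}

/-- `ℤ[W̊(θ∨)] ⊆ h̊`: the additive group generated by the `W̊`-orbit of `θ∨`. -/
def thetaOrbitSpan (nu : Module.Dual ℂ S.H → S.H) (θ : Module.Dual ℂ S.H) :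
    AddSubgroup S.H :=
  AddSubgroup.closure {h | ∃ w ∈ S.finWeyl nu, h = w ((2 / θ (nu θ)) • nu θ)}

/-- The `d₀`-eigenspace of `V` for the eigenvalue `μ`. -/
def d0Eig (μ : ℂ) : Submodule ℂ V where
  carrier := {v : V | ⁅S.D 0 1, v⁆ = μ • v}
  add_mem' := by
    intro a b ha hb
    show ⁅S.D 0 1, a + b⁆ = μ • (a + b)
    rw [lie_add, ha, hb, smul_add]
  zero_mem' := by
    show ⁅S.D 0 1, (0 : V)⁆ = μ • (0 : V)
    rw [lie_zero, smul_zero]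
  smul_mem' := by
    intro c v hv
    show ⁅S.D 0 1, c • v⁆ = μ • c • v
    rw [lie_smul, hv, smul_comm]

end LoopAffVir

end

/-- A simple complex Lie algebra with an invariant nondegenerate form has a root `α` with an
`sl₂`-triple `(x, h, y)` inside `g_α ⊕ H ⊕ g_{-α}` such that `⟨h, h⟩ ≠ 0`. -/
theorem exists_root_sl2_form_ne_zero {g : Type*} [LieRing g] [LieAlgebra ℂ g]
    [FiniteDimensional ℂ g] [LieAlgebra.IsSimple ℂ g]
    (H : LieSubalgebra ℂ g) [H.IsCartanSubalgebra] (B : g →ₗ[ℂ] g →ₗ[ℂ] ℂ)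
    (hnd : ∀ x : g, (∀ y : g, B x y = 0) → x = 0)
    (hinv : ∀ x y z : g, B ⁅x, y⁆ z = B x ⁅y, z⁆) :
    ∃ (α : Module.Dual ℂ H) (x y : g) (h : H), α h = 2 ∧ x ≠ 0 ∧ y ≠ 0 ∧
      (∀ k : H, ⁅(k : g), x⁆ = α k • x) ∧ (∀ k : H, ⁅(k : g), y⁆ = (-α) k • y) ∧
      ⁅x, y⁆ = h ∧ B h h ≠ 0 := by
  obtain ⟨α, hα⟩ : ∃ α : LieModule.Weight ℂ H g, α.IsNonZero := by
    by_contra! hne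
    have hspan := LieAlgebra.IsKilling.span_weight_isNonZero_eq_top ℂ g H
    have := RootPairing.IsIrreducible.nontrivial
      (LieAlgebra.IsKilling.rootSystem H)
    have hempty : {α : LieModule.Weight ℂ H g | α.IsNonZero} = ∅ :=
      Set.eq_empty_of_forall_notMem fun α hα ↦ hα (hne α)
    rw [hempty, Set.image_empty, Submodule.span_empty] at hspan
    exact bot_ne_top hspan
  obtain ⟨h, x, y, ht, hx, hy⟩ :=
    LieAlgebra.IsKilling.exists_isSl2Triple_of_weight_isNonZero hα
  have hcoroot := ht.h_eq_coroot hα hx hy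
  have hxα (k : H) : ⁅(k : g), x⁆ = α k • x :=
    LieAlgebra.IsKilling.lie_eq_smul_of_mem_rootSpace hx k
  have hyα (k : H) : ⁅(k : g), y⁆ = -α k • y :=
    LieAlgebra.IsKilling.lie_eq_smul_of_mem_rootSpace hy k
  have hxy : B x y ≠ 0 := by
    intro hxy
    refine ht.e_ne_zero (hnd x fun z ↦ ?_)
    have hz : z ∈ (⨆ χ : H → ℂ, LieModule.genWeightSpace g χ : LieSubmodule ℂ H g) := by
      rw [LieModule.iSup_genWeightSpace_eq_top ℂ H g]; trivial
    induction hz using LieSubmodule.iSup_induction' with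
    | zero => simp
    | add u v _ _ hu hv => rw [map_add, hu, hv, add_zero]
    | mem χ z hz =>
      by_cases hχ : χ = -α
      · have hrank := LieAlgebra.IsKilling.finrank_rootSpace_eq_one (-α) hα.neg
        subst hχ
        obtain ⟨c, hc⟩ := (finrank_eq_one_iff_of_nonzero' (⟨y, hy⟩ : LieAlgebra.rootSpace H (-α))
          (by simpa [Subtype.ext_iff] using ht.f_ne_zero)).mp hrank ⟨z, hz⟩
        have hcz : c • y = z := congrArg Subtype.val hc
        rw [← hcz, map_smul, hxy, smul_zero]
      · obtain ⟨k, hk⟩ := Function.ne_iff.mp hχ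
        have hkz : ⁅(k : g), z⁆ = χ k • z :=
          LieAlgebra.IsKilling.lie_eq_smul_of_mem_rootSpace hz k
        have h1 := hinv x k z
        rw [hkz, ← lie_skew, hxα] at h1
        simp only [map_neg, map_smul, LinearMap.neg_apply, LinearMap.smul_apply,
          smul_eq_mul] at h1
        have h2 : (χ k + α k) * B x z = 0 := by linear_combination -h1
        refine (mul_eq_zero.mp h2).resolve_left fun h3 ↦ hk ?_
        simpa using eq_neg_of_add_eq_zero_left h3
  refine ⟨α.toLinear, x, y, LieAlgebra.IsKilling.coroot α,
    LieAlgebra.IsKilling.root_apply_coroot hα, ht.e_ne_zero, ht.f_ne_zero, hxα, hyα,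
    by rw [ht.lie_e_f, hcoroot], ?_⟩
  rw [← hcoroot]
  nth_rewrite 1 [← ht.lie_e_f]
  rw [hinv, ← lie_skew, ht.lie_h_f_nsmul]
  simpa using hxy

open Module in
/-- Commuting operators preserving a nonzero finite dimensional subspace have a joint
eigenvector in it. -/
theorem exists_joint_eigenvector {V ι : Type*} [AddCommGroup V] [Module ℂ V]
    (T : ι → End ℂ V) (hT : ∀ i j, Commute (T i) (T j)) (s : Finset ι) (W : Submodule ℂ V)
    [FiniteDimensional ℂ W] (hW : W ≠ ⊥) (hTW : ∀ i, ∀ v ∈ W, T i v ∈ W) :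
    ∃ v ∈ W, v ≠ 0 ∧ ∀ i ∈ s, ∃ μ : ℂ, T i v = μ • v := by
  classical
  induction s using Finset.induction_on generalizing W with
  | empty =>
    obtain ⟨v, hv, hv0⟩ := W.ne_bot_iff.mp hW
    exact ⟨v, hv, hv0, by simp⟩
  | insert i s _ ih =>
    have : Nontrivial W := Submodule.nontrivial_iff_ne_bot.mpr hW
    obtain ⟨μ, hμ⟩ := End.exists_eigenvalue ((T i).restrict (hTW i))
    obtain ⟨w, hw⟩ := hμ.exists_hasEigenvector
    have hwi : T i w = μ • (w : V) := congrArg Subtype.val hw.apply_eq_smul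
    let W' : Submodule ℂ V := W ⊓ (T i).eigenspace μ
    have : FiniteDimensional ℂ W' := Submodule.finiteDimensional_inf_left _ _
    have hW' : W' ≠ ⊥ := W'.ne_bot_iff.mpr
      ⟨w, ⟨w.2, End.mem_eigenspace_iff.mpr hwi⟩, by simpa using hw.2⟩
    obtain ⟨v, hv, hv0, hvs⟩ := ih W' hW' fun j v hv ↦
      ⟨hTW j v hv.1, End.mem_eigenspace_iff.mpr (by
        rw [← End.mul_apply, hT i j, End.mul_apply, End.mem_eigenspace_iff.mp hv.2, map_smul])⟩
    refine ⟨v, hv.1, hv0, fun j hj ↦ ?_⟩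
    obtain rfl | hj := Finset.mem_insert.mp hj
    · exact ⟨μ, End.mem_eigenspace_iff.mp hv.2⟩
    · exact hvs j hj

open Module in
/-- If `[T, p] = d p`, then `p` shifts the eigenvalues of `T` by `d`. -/
theorem apply_pow_eq_smul_of_mul_eq {V : Type*} [AddCommGroup V] [Module ℂ V] {T p : End ℂ V}
    {d : ℂ} (h : T * p = p * T + d • p) {v : V} {μ : ℂ} (hμ : T v = μ • v) (k : ℕ) :
    T ((p ^ k) v) = (μ + k * d) • (p ^ k) v := by
  induction k with
  | zero => simpa using hμ
  | succ k ih =>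
    rw [pow_succ', End.mul_apply, ← End.mul_apply T p, h, LinearMap.add_apply, End.mul_apply, ih,
      map_smul, LinearMap.smul_apply, ← add_smul]
    push_cast
    congr 1
    ring

open Module in
/-- If `[p, q] = c`, then powers of `p` and `q` shift the eigenvalues of `p q`. -/
theorem heisenberg_eigenvalue_shift {V : Type*} [AddCommGroup V] [Module ℂ V] {p q : End ℂ V}
    {c : ℂ} (hpq : p * q - q * p = c • 1) {v : V} {μ : ℂ} (hμ : (p * q) v = μ • v) (k : ℕ) :
    (p * q) ((p ^ k) v) = (μ + k * -c) • (p ^ k) v ∧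
      (p * q) ((q ^ k) v) = (μ + k * c) • (q ^ k) v := by
  have hqp : q * p = p * q - c • 1 := by rw [← hpq]; abel
  have hpq' : p * q = q * p + c • 1 := by rw [← hpq]; abel
  refine ⟨apply_pow_eq_smul_of_mul_eq ?_ hμ k, apply_pow_eq_smul_of_mul_eq ?_ hμ k⟩
  · rw [mul_assoc, hqp, mul_sub, mul_smul_comm, mul_one, neg_smul, sub_eq_add_neg]
  · nth_rewrite 1 [hpq']
    rw [add_mul, mul_assoc, smul_mul_assoc, one_mul]

open Module in
/-- An eigenvector of `p q`, with `[p, q] = c ≠ 0`, is not killed by both a power of `p` and a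
power of `q`. -/
theorem heisenberg_pow_ne_zero {V : Type*} [AddCommGroup V] [Module ℂ V] {p q : End ℂ V} {c : ℂ}
    (hc : c ≠ 0) (hpq : p * q - q * p = c • 1) {v : V} (hv : v ≠ 0) {μ : ℂ}
    (hμ : (p * q) v = μ • v) :
    (∀ k, (p ^ k) v ≠ 0) ∨ (∀ k, (q ^ k) v ≠ 0) := by
  by_contra! hcon
  obtain ⟨k, hk0, hk⟩ := Nat.exists_not_and_succ_of_not_zero_of_exists
    (p := fun k ↦ (p ^ k) v = 0) (by simpa using hv) hcon.1
  obtain ⟨l, hl0, hl⟩ := Nat.exists_not_and_succ_of_not_zero_of_exists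
    (p := fun k ↦ (q ^ k) v = 0) (by simpa using hv) hcon.2
  have h1 := (heisenberg_eigenvalue_shift hpq hμ k).1
  have h2 := (heisenberg_eigenvalue_shift hpq hμ l).2
  have hpq' : p * q = q * p + c • 1 := by rw [← hpq]; abel
  rw [pow_succ', End.mul_apply] at hk hl
  rw [hpq', LinearMap.add_apply, End.mul_apply, hk, map_zero, zero_add, LinearMap.smul_apply,
    End.one_apply] at h1
  rw [End.mul_apply, hl, map_zero, eq_comm, smul_eq_zero_iff_left hl0] at h2
  have h3 : c = μ + k * -c := smul_left_injective ℂ hk0 h1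
  have h4 : c * ((k + l + 1 : ℕ) : ℂ) = 0 := by push_cast; linear_combination h3 + h2
  exact mul_ne_zero hc (Nat.cast_ne_zero.mpr (by omega)) h4

/-- Iterating an operator of degree `r` raises the degree by `k r`. -/
theorem pow_apply_mem_of_degree {V : Type*} [AddCommGroup V] [Module ℂ V]
    {U : ℤ → Submodule ℂ V} {X : Module.End ℂ V} {r : ℤ} (hX : ∀ j, ∀ v ∈ U j, X v ∈ U (j + r))
    {j : ℤ} {v : V} (hv : v ∈ U j) (k : ℕ) : (X ^ k) v ∈ U (j + k * r) := by
  induction k with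
  | zero => simpa using hv
  | succ k ih =>
    rw [pow_succ', Module.End.mul_apply]
    convert hX _ _ ih using 2
    push_cast; ring

open Module in
/-- A graded module over a Heisenberg algebra on which the center acts by a nonzero scalar does
not have bounded finite graded dimensions. -/
theorem heisenberg_not_bounded {V : Type*} [AddCommGroup V] [Module ℂ V]
    (U : ℤ → Submodule ℂ V) [∀ j, FiniteDimensional ℂ (U j)] (d : ℕ)
    (hd : ∀ j, finrank ℂ (U j) ≤ d) (hU : U 0 ≠ ⊥) (P Q : ℕ → End ℂ V)
    (hP : ∀ (n : ℕ) (j : ℤ), ∀ v ∈ U j, P n v ∈ U (j + (n + 1)))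
    (hQ : ∀ (n : ℕ) (j : ℤ), ∀ v ∈ U j, Q n v ∈ U (j + -(n + 1)))
    (hPP : ∀ n m, Commute (P n) (P m)) (hQQ : ∀ n m, Commute (Q n) (Q m))
    (hPQ : ∀ n m, n ≠ m → Commute (P n) (Q m)) {c : ℂ} (hc : c ≠ 0)
    (hPQc : ∀ n : ℕ, P n * Q n - Q n * P n = ((n + 1) * c) • 1) : False := by
  have hcomm (n m) : Commute (P n * Q n) (P m * Q m) := by
    obtain rfl | h := eq_or_ne n m
    · exact Commute.refl _
    · exact ((hPP n m).mul_right (hPQ n m h)).mul_left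
        ((hPQ m n h.symm).symm.mul_right (hQQ n m))
  have hnc (n : ℕ) : ((n : ℂ) + 1) * c ≠ 0 := mul_ne_zero n.cast_add_one_ne_zero hc
  obtain ⟨v, hv, hv0, hμ⟩ := exists_joint_eigenvector (fun n ↦ P n * Q n) hcomm
    (Finset.range (2 * d + 1)) (U 0) hU fun n v hv ↦ by
      simpa using hP n _ _ (hQ n _ _ hv)
  choose! μ hμ using hμ
  have hX (n : ℕ) (hn : n ∈ Finset.range (2 * d + 1)) :
      ∃ X : End ℂ V, (X = P n ∨ X = Q n) ∧ ∀ k, (X ^ k) v ≠ 0 :=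
    (heisenberg_pow_ne_zero (hnc n) (hPQc n) hv0 (hμ n hn)).elim
      (fun h ↦ ⟨_, .inl rfl, h⟩) (fun h ↦ ⟨_, .inr rfl, h⟩)
  choose! X hXPQ hX0 using hX
  let N : ℕ := (2 * d + 1).factorial
  let e : ℕ → ℕ := fun n ↦ N / (n + 1)
  have he (n : ℕ) (hn : n ∈ Finset.range (2 * d + 1)) : e n * (n + 1) = N :=
    Nat.div_mul_cancel (Nat.dvd_factorial n.succ_pos (Finset.mem_range.mp hn))
  let w : Fin (2 * d + 1) → V := fun n ↦ (X n ^ e n) v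
  have hmem (n : Fin (2 * d + 1)) : (n : ℕ) ∈ Finset.range (2 * d + 1) := Finset.mem_range.mpr n.2
  have hw0 (n) : w n ≠ 0 := hX0 n (hmem n) _
  have hwmem (n) : w n ∈ U N ⊔ U (-N) := by
    have hNe : (e n : ℤ) * (n + 1) = N := mod_cast he n (hmem n)
    rcases hXPQ n (hmem n) with h | h
    · refine Submodule.mem_sup_left ?_
      have := pow_apply_mem_of_degree (hP n) hv (e n)
      rwa [hNe, zero_add, ← h] at this
    · refine Submodule.mem_sup_right ?_
      have := pow_apply_mem_of_degree (hQ n) hv (e n)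
      rwa [mul_neg, hNe, zero_add, ← h] at this
  have hTne (n m : Fin (2 * d + 1)) (hnm : n ≠ m) : (P n * Q n) (w m) = μ n • w m := by
    have hnm' : (n : ℕ) ≠ m := fun h ↦ hnm (Fin.ext h)
    have hcX : Commute (P n * Q n) (X m) := by
      rcases hXPQ m (hmem m) with h | h <;> rw [h]
      · exact (hPP _ _).mul_left (hPQ _ _ hnm'.symm).symm
      · exact (hPQ _ _ hnm').mul_left (hQQ _ _)
    rw [← End.mul_apply, hcX.pow_right, End.mul_apply, hμ n (hmem n), map_smul]
  have hTeq (n : Fin (2 * d + 1)) : ∃ b : ℂ, b ≠ 0 ∧ (P n * Q n) (w n) = (μ n + b) • w n := by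
    have hen : (e n : ℂ) ≠ 0 := by
      refine Nat.cast_ne_zero.mpr fun h ↦ ?_
      have := he n (hmem n)
      rw [h, zero_mul] at this
      exact (Nat.factorial_ne_zero _) this.symm
    have := heisenberg_eigenvalue_shift (hPQc n) (hμ n (hmem n)) (e n)
    rcases hXPQ n (hmem n) with h | h
    · exact ⟨_, mul_ne_zero hen (neg_ne_zero.mpr (hnc n)), by simpa only [w, h] using this.1⟩
    · exact ⟨_, mul_ne_zero hen (hnc n), by simpa only [w, h] using this.2⟩
  have hli : LinearIndependent ℂ w := by
    refine Fintype.linearIndependent_iff.mpr fun a ha n ↦ ?_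
    obtain ⟨b, hb, hbn⟩ := hTeq n
    have h1 : (P n * Q n - μ n • 1) (∑ i, a i • w i) = (a n * b) • w n := by
      rw [map_sum, Finset.sum_eq_single n]
      · rw [map_smul, LinearMap.sub_apply, hbn, LinearMap.smul_apply, End.one_apply, ← sub_smul,
          add_sub_cancel_left, smul_smul]
      · intro m _ hm
        rw [map_smul, LinearMap.sub_apply, hTne n m hm.symm, LinearMap.smul_apply, End.one_apply,
          sub_self, smul_zero]
      · simp
    rw [ha, map_zero, eq_comm, smul_eq_zero_iff_left (hw0 n)] at h1
    exact (mul_eq_zero.mp h1).resolve_right hb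
  have hli' : LinearIndependent ℂ (fun n ↦ (⟨w n, hwmem n⟩ : ↥(U N ⊔ U (-N)))) :=
    LinearIndependent.of_comp (U N ⊔ U (-N)).subtype hli
  have h1 := hli'.fintype_card_le_finrank
  have h2 := Submodule.finrank_add_le_finrank_add_finrank (U N) (U (-N))
  have h3 := hd N
  have h4 := hd (-N)
  rw [Fintype.card_fin] at h1
  omega

open Module in
/-- A weight vector for an `sl₂`-action killed by `f ^ (k + 1)` but not by `f ^ k`, and by some
power of `e`, has weight in `k - ℕ`. -/
theorem sl2_weight_eq_sub {V : Type*} [AddCommGroup V] [Module ℂ V] {e f h : End ℂ V}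
    (hef : e * f = f * e + h) (hhe : h * e = e * h + (2 : ℂ) • e)
    (hhf : h * f = f * h + (-2 : ℂ) • f) {v : V} {μ : ℂ} (hv : h v = μ • v)
    (he : ∃ N, (e ^ N) v = 0) {k : ℕ} (hk : (f ^ (k + 1)) v = 0) (hk0 : (f ^ k) v ≠ 0) :
    ∃ j : ℕ, μ = k - j := by
  have hcomm {u : V} {ν : ℂ} (hu : h u = ν • u) (n : ℕ) :
      e ((f ^ (n + 1)) u) = (f ^ (n + 1)) (e u) + ((n + 1) * (ν - n)) • (f ^ n) u := by
    induction n with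
    | zero => simpa [hu] using congrArg (· u) hef
    | succ n ih =>
      have hstep := congrArg (· ((f ^ (n + 1)) u)) hef
      simp only [LinearMap.add_apply, End.mul_apply] at hstep
      rw [pow_succ' f (n + 1), End.mul_apply, hstep, ih, map_add, map_smul, ← End.mul_apply f,
        ← pow_succ', ← End.mul_apply f, ← pow_succ', apply_pow_eq_smul_of_mul_eq hhf hu, add_assoc,
        ← add_smul]
      push_cast
      congr 2
      ring
  by_contra! hcon
  have key (i : ℕ) : (f ^ (k + i + 1)) ((e ^ i) v) = 0 ∧ (f ^ (k + i)) ((e ^ i) v) ≠ 0 := by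
    induction i with
    | zero => exact ⟨hk, hk0⟩
    | succ i ih =>
      have hwt := apply_pow_eq_smul_of_mul_eq hhe hv i
      have h1 := hcomm hwt (k + i)
      have h2 := hcomm hwt (k + i + 1)
      rw [ih.1, map_zero] at h1
      rw [pow_succ' f (k + i + 1), End.mul_apply, ih.1, map_zero, map_zero, smul_zero, add_zero]
        at h2
      rw [pow_succ' e, End.mul_apply]
      refine ⟨by rw [← add_assoc, pow_succ' f (k + i + 1)]; exact h2.symm, fun h3 ↦ ?_⟩
      rw [← add_assoc] at h3
      rw [h3, zero_add, eq_comm, smul_eq_zero_iff_left ih.2] at h1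
      refine (mul_eq_zero.mp h1).elim (Nat.cast_add_one_ne_zero _) fun h4 ↦ hcon i ?_
      push_cast at h4
      linear_combination h4
  obtain ⟨N, hN⟩ := he
  exact (key N).2 (by rw [hN, map_zero])

open Module in
/-- Weights of an `sl₂`-action with `e` and `f` locally nilpotent are integers. -/
theorem sl2_weight_int {V : Type*} [AddCommGroup V] [Module ℂ V] {e f h : End ℂ V}
    (hef : e * f = f * e + h) (hhe : h * e = e * h + (2 : ℂ) • e)
    (hhf : h * f = f * h + (-2 : ℂ) • f) {v : V} (hv0 : v ≠ 0) {μ : ℂ} (hv : h v = μ • v)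
    (he : ∃ N, (e ^ N) v = 0) (hf : ∃ N, (f ^ N) v = 0) : ∃ m : ℤ, μ = m := by
  obtain ⟨k, hk0, hk⟩ := Nat.exists_not_and_succ_of_not_zero_of_exists
    (p := fun k ↦ (f ^ k) v = 0) (by simpa using hv0) hf
  obtain ⟨j, hj⟩ := sl2_weight_eq_sub hef hhe hhf hv he hk hk0
  exact ⟨k - j, by simpa using hj⟩

open Module in
/-- `f ^ m` is injective on the weight `m` space of an `sl₂`-action with `e` locally nilpotent. -/
theorem sl2_eq_zero_of_pow_eq_zero {V : Type*} [AddCommGroup V] [Module ℂ V] {e f h : End ℂ V}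
    (hef : e * f = f * e + h) (hhe : h * e = e * h + (2 : ℂ) • e)
    (hhf : h * f = f * h + (-2 : ℂ) • f) {v : V} {m : ℕ} (hv : h v = (m : ℂ) • v)
    (he : ∃ N, (e ^ N) v = 0) (hf : (f ^ m) v = 0) : v = 0 := by
  classical
  by_contra hv0
  have hex : ∃ k, (f ^ k) v = 0 := ⟨m, hf⟩
  obtain ⟨k, hk⟩ : ∃ k, Nat.find hex = k + 1 := Nat.exists_eq_succ_of_ne_zero fun h0 ↦
    hv0 (by simpa [h0] using Nat.find_spec hex)
  obtain ⟨j, hj⟩ := sl2_weight_eq_sub hef hhe hhf hv he (hk ▸ Nat.find_spec hex)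
    (Nat.find_min hex (by omega))
  have h1 : k + 1 ≤ m := hk ▸ Nat.find_min' hex hf
  have h2 : m + j = k := by exact_mod_cast (by rw [hj]; ring : (m : ℂ) + j = k)
  omega

namespace LoopAffVir

open Module

variable {g A L : Type*} [LieRing g] [LieAlgebra ℂ g] [CommRing A] [Algebra ℂ A]
  [LieRing L] [LieAlgebra ℂ L] (S : LoopAffVir g A L)
  (V : Type*) [AddCommGroup V] [Module ℂ V] [LieRingModule L V] [LieModule ℂ L V]

/-- The joint eigenspace of `h̊`, `d₀` and `C` with eigenvalues `p`, `μ` and `γ`. -/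
def jointEigenspace (p : Dual ℂ S.H) (μ γ : ℂ) : Submodule ℂ V where
  carrier := {v | (∀ h : S.H, ⁅S.E 0 (h : g) 1, v⁆ = p h • v) ∧
    ⁅S.D 0 1, v⁆ = μ • v ∧ ⁅S.C 1, v⁆ = γ • v}
  add_mem' := fun {u v} hu hv ↦ ⟨fun h ↦ by rw [lie_add, hu.1, hv.1, smul_add],
    by rw [lie_add, hu.2.1, hv.2.1, smul_add], by rw [lie_add, hu.2.2, hv.2.2, smul_add]⟩
  zero_mem' := by simp
  smul_mem' := fun c v hv ↦ ⟨fun h ↦ by rw [lie_smul, hv.1, smul_comm],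
    by rw [lie_smul, hv.2.1, smul_comm], by rw [lie_smul, hv.2.2, smul_comm]⟩

variable {V}

theorem exists_wtSpace_le_jointEigenspace (χ : Dual ℂ S.cartan) :
    ∃ (p : Dual ℂ S.H) (μ γ : ℂ), (∀ h, p h = χ (S.eH h)) ∧
      S.wtSpace V χ ≤ S.jointEigenspace V p μ γ := by
  let p : Dual ℂ S.H :=
    { toFun := fun h ↦ χ (S.eH h)
      map_add' := fun h k ↦ by
        rw [← map_add]; congr 1; exact Subtype.ext (by simp [eH])
      map_smul' := fun c h ↦ by
        rw [RingHom.id_apply, ← map_smul]; congr 1; exact Subtype.ext (by simp [eH]) }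
  exact ⟨p, χ S.d0, χ S.C1, fun _ ↦ rfl, fun v hv ↦ ⟨fun h ↦ hv (S.eH h), hv S.d0, hv S.C1⟩⟩

theorem finiteDimensional_jointEigenspace (hfd : S.HasFinDimWeightSpaces V)
    (hK : ∀ v : V, ⁅S.K 1, v⁆ = 0) (p : Dual ℂ S.H) (μ γ : ℂ) :
    FiniteDimensional ℂ (S.jointEigenspace V p μ γ) := by
  by_cases hbot : S.jointEigenspace V p μ γ = ⊥
  · rw [hbot]; infer_instance
  obtain ⟨v, hv, hv0⟩ := (Submodule.ne_bot_iff _).mp hbot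
  have hscalar (z : S.cartan) : ∃ c : ℂ, ∀ u ∈ S.jointEigenspace V p μ γ, ⁅(z : L), u⁆ = c • u := by
    obtain ⟨z, hz⟩ := z
    induction hz using Submodule.span_induction with
    | mem z hz =>
      obtain ⟨h, hh, rfl⟩ | rfl | rfl | rfl := hz
      · exact ⟨p ⟨h, hh⟩, fun u hu ↦ hu.1 ⟨h, hh⟩⟩
      · exact ⟨0, fun u _ ↦ by simp [hK]⟩
      · exact ⟨μ, fun u hu ↦ hu.2.1⟩
      · exact ⟨γ, fun u hu ↦ hu.2.2⟩
    | zero => exact ⟨0, by simp⟩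
    | add y z _ _ hy hz =>
      obtain ⟨b, hb⟩ := hy
      obtain ⟨c, hc⟩ := hz
      exact ⟨b + c, fun u hu ↦ by
        have h1 := hb u hu
        have h2 := hc u hu
        simp only at h1 h2 ⊢
        rw [add_lie, h1, h2, add_smul]⟩
    | smul t z _ hz =>
      obtain ⟨c, hc⟩ := hz
      exact ⟨t * c, fun u hu ↦ by
        have h1 := hc u hu
        simp only at h1 ⊢
        rw [smul_lie, h1, smul_smul]⟩
  choose c hc using hscalar
  let χ : Dual ℂ S.cartan :=
    { toFun := c
      map_add' := fun y z ↦ smul_left_injective ℂ hv0 (by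
        simp only [add_smul]
        rw [← hc _ v hv, ← hc _ v hv, ← hc _ v hv, ← add_lie, Submodule.coe_add])
      map_smul' := fun t z ↦ smul_left_injective ℂ hv0 (by
        simp only [RingHom.id_apply, smul_eq_mul, mul_smul]
        rw [← hc _ v hv, ← hc _ v hv, ← smul_lie, Submodule.coe_smul]) }
  have := hfd χ
  exact Submodule.finiteDimensional_of_le
    (show S.jointEigenspace V p μ γ ≤ S.wtSpace V χ from fun u hu z ↦ hc z u hu)

theorem E_zero_lie_E (h x : g) (n : ℤ) (a : A) :
    ⁅S.E 0 h 1, S.E n x a⁆ = S.E n ⁅h, x⁆ a := by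
  simp [S.lie_EE]

theorem lie_E_mem_jointEigenspace {β : Dual ℂ S.H} {x : g}
    (hx : ∀ k : S.H, ⁅(k : g), x⁆ = β k • x) (n : ℤ) (a : A) {p : Dual ℂ S.H} {μ γ : ℂ} {v : V}
    (hv : v ∈ S.jointEigenspace V p μ γ) :
    ⁅S.E n x a, v⁆ ∈ S.jointEigenspace V (p + β) (μ + n) γ := by
  refine ⟨fun h ↦ ?_, ?_, ?_⟩
  · rw [leibniz_lie, E_zero_lie_E, hx, hv.1, map_smul, LinearMap.smul_apply, smul_lie, lie_smul,
      ← add_smul, LinearMap.add_apply, add_comm]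
  · rw [leibniz_lie, S.lie_DE, hv.2.1, smul_lie, lie_smul, one_mul, add_zero, ← add_smul, add_comm]
  · rw [leibniz_lie, S.C_central, zero_lie, zero_add, hv.2.2, lie_smul]

theorem toEnd_E_pow_mem_jointEigenspace {β : Dual ℂ S.H} {x : g}
    (hx : ∀ k : S.H, ⁅(k : g), x⁆ = β k • x) (n : ℤ) (a : A) {p : Dual ℂ S.H} {μ γ : ℂ} {v : V}
    (hv : v ∈ S.jointEigenspace V p μ γ) (k : ℕ) :
    (LieModule.toEnd ℂ L V (S.E n x a) ^ k) v ∈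
      S.jointEigenspace V (p + (k : ℂ) • β) (μ + k * n) γ := by
  induction k with
  | zero => simpa using hv
  | succ k ih =>
    rw [pow_succ', End.mul_apply, LieModule.toEnd_apply_apply]
    convert S.lie_E_mem_jointEigenspace hx n a ih using 2
    · push_cast; rw [add_smul, one_smul, add_assoc]
    · push_cast; ring

/-- If `K ⊗ 1` acts trivially, `x ⊗ tⁿ`, `y ⊗ t⁻ⁿ` and `[x, y]` act as an `sl₂`-triple when
`x`, `y`, `[x, y]` is one. -/
theorem toEnd_sl2_relations (hK : ∀ v : V, ⁅S.K 1, v⁆ = 0) {x y h : g} (hxy : ⁅x, y⁆ = h)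
    (hhx : ⁅h, x⁆ = (2 : ℂ) • x) (hhy : ⁅h, y⁆ = (-2 : ℂ) • y) (n : ℤ) :
    let e := LieModule.toEnd ℂ L V (S.E n x 1)
    let f := LieModule.toEnd ℂ L V (S.E (-n) y 1)
    let t := LieModule.toEnd ℂ L V (S.E 0 h 1)
    e * f = f * e + t ∧ t * e = e * t + (2 : ℂ) • e ∧ t * f = f * t + (-2 : ℂ) • f := by
  refine ⟨?_, ?_, ?_⟩ <;> ext v <;>
    simp only [End.mul_apply, LinearMap.add_apply, LieModule.toEnd_apply_apply,
      LinearMap.smul_apply] <;> rw [leibniz_lie, add_comm]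
  · rw [S.lie_EE, hxy, add_neg_cancel, one_mul, add_lie, smul_lie, hK, smul_zero, add_zero]
  · rw [E_zero_lie_E, hhx, map_smul, LinearMap.smul_apply, smul_lie]
  · rw [E_zero_lie_E, hhy, map_smul, LinearMap.smul_apply, smul_lie]

/-- The translation by `m n δ` in the affine Weyl group: it embeds weight spaces. -/
theorem finrank_jointEigenspace_le_add (hfd : S.HasFinDimWeightSpaces V)
    (hK : ∀ v : V, ⁅S.K 1, v⁆ = 0) {α : Dual ℂ S.H} {x y : g} {h : S.H} (hαh : α h = 2)
    (hx : ∀ k : S.H, ⁅(k : g), x⁆ = α k • x) (hy : ∀ k : S.H, ⁅(k : g), y⁆ = (-α) k • y)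
    (hxy : ⁅x, y⁆ = h)
    (hxn : ∀ (n : ℤ) (v : V), ∃ N, (LieModule.toEnd ℂ L V (S.E n x 1) ^ N) v = 0)
    (hyn : ∀ (n : ℤ) (v : V), ∃ N, (LieModule.toEnd ℂ L V (S.E n y 1) ^ N) v = 0)
    {p : Dual ℂ S.H} {m : ℕ} (hm : p h = m) (n : ℤ) (μ γ : ℂ) :
    finrank ℂ (S.jointEigenspace V p μ γ) ≤
      finrank ℂ (S.jointEigenspace V p (μ + m * n) γ) := by
  have hhx : ⁅(h : g), x⁆ = (2 : ℂ) • x := by rw [hx, hαh]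
  have hhy : ⁅(h : g), y⁆ = (-2 : ℂ) • y := by rw [hy, LinearMap.neg_apply, hαh]
  obtain ⟨h1, h2, h3⟩ := S.toEnd_sl2_relations hK hxy hhx hhy 0
  obtain ⟨h1', h2', h3'⟩ := S.toEnd_sl2_relations hK (x := y) (y := x) (h := -h)
    (by rw [← lie_skew, hxy]) (by rw [neg_lie, hhy, neg_smul, neg_neg])
    (by rw [neg_lie, hhx, neg_smul]) (-n)
  rw [neg_zero] at h1 h3
  rw [neg_neg] at h1' h3'
  have hmem {v : V} (hv : v ∈ S.jointEigenspace V p μ γ) :=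
    S.toEnd_E_pow_mem_jointEigenspace hy 0 1 hv m
  let f := LieModule.toEnd ℂ L V (S.E n x 1) ^ m * LieModule.toEnd ℂ L V (S.E 0 y 1) ^ m
  have hf (v : V) (hv : v ∈ S.jointEigenspace V p μ γ) :
      f v ∈ S.jointEigenspace V p (μ + m * n) γ := by
    have := S.toEnd_E_pow_mem_jointEigenspace hx n 1 (hmem hv) m
    rwa [smul_neg, neg_add_cancel_right, Int.cast_zero, mul_zero, add_zero] at this
  have := S.finiteDimensional_jointEigenspace hfd hK p (μ + m * n) γ
  refine LinearMap.finrank_le_finrank_of_injective (f := f.restrict hf) ?_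
  rw [← LinearMap.ker_eq_bot, LinearMap.ker_eq_bot']
  rintro ⟨v, hv⟩ hfv
  have hfv' : f v = 0 := congrArg Subtype.val hfv
  refine Subtype.ext (sl2_eq_zero_of_pow_eq_zero h1 h2 h3 (m := m) ?_ (hxn 0 v)
    (sl2_eq_zero_of_pow_eq_zero h1' h2' h3' (m := m) ?_ (hyn _ _) hfv'))
  · rw [LieModule.toEnd_apply_apply, hv.1, hm]
  · rw [map_neg, LinearMap.neg_apply, map_neg, LinearMap.neg_apply, LieModule.toEnd_apply_apply,
      (hmem hv).1, ← neg_smul, LinearMap.add_apply, LinearMap.smul_apply, LinearMap.neg_apply, hm,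
      hαh, smul_eq_mul]
    congr 1
    ring

/-- The dimensions of the spaces of weight `λ + jδ` are uniformly bounded if `λ` does not vanish
on some coroot. -/
theorem exists_finrank_jointEigenspace_le (hfd : S.HasFinDimWeightSpaces V)
    (hK : ∀ v : V, ⁅S.K 1, v⁆ = 0) {α : Dual ℂ S.H} {x y : g} {h : S.H} (hαh : α h = 2)
    (hx : ∀ k : S.H, ⁅(k : g), x⁆ = α k • x) (hy : ∀ k : S.H, ⁅(k : g), y⁆ = (-α) k • y)
    (hxy : ⁅x, y⁆ = h)
    (hxn : ∀ (n : ℤ) (v : V), ∃ N, (LieModule.toEnd ℂ L V (S.E n x 1) ^ N) v = 0)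
    (hyn : ∀ (n : ℤ) (v : V), ∃ N, (LieModule.toEnd ℂ L V (S.E n y 1) ^ N) v = 0)
    {p : Dual ℂ S.H} {m : ℤ} (hm : p h = m) (hm0 : m ≠ 0) (μ γ : ℂ) :
    ∃ d : ℕ, ∀ j : ℤ, finrank ℂ (S.jointEigenspace V p (μ + j) γ) ≤ d := by
  have key (n : ℤ) (μ : ℂ) : finrank ℂ (S.jointEigenspace V p μ γ) ≤
      finrank ℂ (S.jointEigenspace V p (μ + m.natAbs * n) γ) := by
    rcases m.natAbs_eq with h1 | h1
    · exact S.finrank_jointEigenspace_le_add hfd hK hαh hx hy hxy hxn hyn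
        (by rw [hm]; nth_rewrite 1 [h1]; simp) n μ γ
    · exact S.finrank_jointEigenspace_le_add hfd hK (α := -α) (h := -h) (by simp [hαh]) hy
        (by simpa using hx) (by rw [← lie_skew, hxy]; rfl) hyn hxn
        (by rw [map_neg, hm]; nth_rewrite 1 [h1]; simp) n μ γ
  generalize hM : m.natAbs = M at key
  refine ⟨∑ r ∈ Finset.range M, finrank ℂ (S.jointEigenspace V p (μ + r) γ), fun j ↦ ?_⟩
  have hpos : (0 : ℤ) < M := by exact_mod_cast hM ▸ Int.natAbs_pos.mpr hm0
  obtain ⟨r, hr⟩ := Int.eq_ofNat_of_zero_le (Int.emod_nonneg j hpos.ne')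
  have hrlt : r < M := by
    have := Int.emod_lt_of_pos j hpos
    omega
  refine (key (-(j / M)) (μ + j)).trans (le_trans (le_of_eq ?_)
    (Finset.single_le_sum (f := fun r : ℕ ↦ finrank ℂ (S.jointEigenspace V p (μ + r) γ))
      (fun _ _ ↦ Nat.zero_le _) (Finset.mem_range.mpr hrlt)))
  have hj : (j : ℂ) = r + M * ((j / M : ℤ) : ℂ) := by
    have := Int.emod_add_mul_ediv j M
    rw [hr] at this
    exact_mod_cast this.symm
  have hshift : μ + j + M * ((-(j / M) : ℤ) : ℂ) = μ + r := by
    rw [hj]; push_cast; ring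
  rw [hshift]

/-- `K ⊗ a` acts by a scalar on an irreducible module with finite dimensional weight spaces. -/
theorem exists_K_eq_smul [hIrr : IsSimpleOrder (LieSubmodule ℂ L V)] (hwt : S.IsWeightModule V)
    (hfd : S.HasFinDimWeightSpaces V) (a : A) : ∃ c : ℂ, ∀ v : V, ⁅S.K a, v⁆ = c • v := by
  obtain ⟨χ, hχ⟩ : ∃ χ, S.wtSpace V χ ≠ ⊥ := by
    by_contra! hbot
    have htop : (⊤ : Submodule ℂ V) = ⊥ := by rw [← hwt]; simp [hbot]
    exact bot_ne_top (α := LieSubmodule ℂ L V)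
      (LieSubmodule.toSubmodule_injective (by simpa using htop.symm))
  have hcomm (z : L) (v : V) : ⁅S.K a, ⁅z, v⁆⁆ = ⁅z, ⁅S.K a, v⁆⁆ := by
    rw [leibniz_lie, S.K_central, zero_lie, zero_add]
  have := hfd χ
  have : Nontrivial (S.wtSpace V χ) := Submodule.nontrivial_iff_ne_bot.mpr hχ
  obtain ⟨c, hc⟩ := End.exists_eigenvalue ((LieModule.toEnd ℂ L V (S.K a)).restrict
    (p := S.wtSpace V χ) (q := S.wtSpace V χ) fun v hv h ↦ by
      rw [LieModule.toEnd_apply_apply, ← hcomm, hv h, lie_smul])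
  obtain ⟨w, hw⟩ := hc.exists_hasEigenvector
  have hwc : ⁅S.K a, (w : V)⁆ = c • (w : V) := congrArg Subtype.val hw.apply_eq_smul
  let W : LieSubmodule ℂ L V :=
    { (LieModule.toEnd ℂ L V (S.K a)).eigenspace c with
      lie_mem := fun {z v} hv ↦ by
        have hv' : ⁅S.K a, v⁆ = c • v := End.mem_eigenspace_iff.mp hv
        exact End.mem_eigenspace_iff.mpr (by
          rw [LieModule.toEnd_apply_apply, hcomm, hv', lie_smul]) }
  have hwW : (w : V) ∈ W := End.mem_eigenspace_iff.mpr hwc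
  have hW : W = ⊤ := (eq_bot_or_eq_top W).resolve_left fun hbot ↦ hw.2 (by
    rw [hbot, LieSubmodule.mem_bot] at hwW
    exact Subtype.ext hwW)
  exact ⟨c, fun v ↦ End.mem_eigenspace_iff.mp (show v ∈ W from hW ▸ LieSubmodule.mem_top v)⟩

/-- If some nonzero element of `g̊` acts trivially then so do all of `g̊`. -/
theorem E_zero_lie_eq_zero [LieAlgebra.IsSimple ℂ g] {h : g} (hh : h ≠ 0)
    (hV : ∀ v : V, ⁅S.E 0 h 1, v⁆ = 0) (x : g) (v : V) : ⁅S.E 0 x 1, v⁆ = 0 := by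
  let I : LieIdeal ℂ g :=
    { carrier := {z | ∀ v : V, ⁅S.E 0 z 1, v⁆ = 0}
      add_mem' := fun {y z} hy hz v ↦ by
        rw [map_add, LinearMap.add_apply, add_lie, hy, hz, add_zero]
      zero_mem' := by simp
      smul_mem' := fun c z hz v ↦ by
        rw [map_smul, LinearMap.smul_apply, smul_lie, hz, smul_zero]
      lie_mem := fun {y z} hz v ↦ by
        rw [← E_zero_lie_E, lie_lie, hz, hz, lie_zero, sub_zero] }
  have hI : I = ⊤ := (LieAlgebra.IsSimple.eq_bot_or_eq_top I).resolve_left fun hbot ↦ hh (by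
    have : h ∈ I := hV
    rwa [hbot, LieSubmodule.mem_bot] at this)
  exact (show x ∈ I from hI ▸ LieSubmodule.mem_top x) v

/-- The operators `h ⊗ tⁿ ⊗ a`, `h ∈ h̊`, satisfy Heisenberg relations. -/
theorem toEnd_E_mul_sub (h : g) (n m : ℤ) (a b : A) {c : ℂ}
    (hc : ∀ v : V, ⁅S.K (a * b), v⁆ = c • v) :
    LieModule.toEnd ℂ L V (S.E n h a) * LieModule.toEnd ℂ L V (S.E m h b) -
      LieModule.toEnd ℂ L V (S.E m h b) * LieModule.toEnd ℂ L V (S.E n h a) =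
        ((if m = -n then (n : ℂ) * S.form h h else 0) * c) • 1 := by
  ext v
  simp only [LinearMap.sub_apply, End.mul_apply, LieModule.toEnd_apply_apply]
  rw [← lie_lie, S.lie_EE, lie_self, map_zero, LinearMap.zero_apply, zero_add, smul_lie, hc,
    smul_smul, LinearMap.smul_apply, End.one_apply]

end LoopAffVir

/-- Proposition `p1`.  Let `V` be an irreducible integrable
`𝔏(A)`-module with finite dimensional weight spaces on which `K ⊗ 1` acts trivially.
Then `(K ⊗ A) ⬝ V = 0`. -/
theorem statement13
    {g A L : Type*} [LieRing g] [LieAlgebra ℂ g] [FiniteDimensional ℂ g]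
    [LieAlgebra.IsSimple ℂ g]
    [CommRing A] [Algebra ℂ A] [Algebra.FiniteType ℂ A]
    [LieRing L] [LieAlgebra ℂ L]
    (S : LoopAffVir g A L)
    (V : Type*) [AddCommGroup V] [Module ℂ V] [LieRingModule L V] [LieModule ℂ L V]
    (hIrr : IsSimpleOrder (LieSubmodule ℂ L V))
    (hInt : S.IsIntegrable V)
    (hK0 : ∀ v : V, ⁅S.K 1, v⁆ = 0)
    :
    ∀ (a : A) (v : V), ⁅S.K a, v⁆ = 0 := by
  have := S.isCartan
  obtain ⟨hwt, hfd, hnil⟩ := hInt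
  obtain ⟨α, x, y, h, hαh, hx0, hy0, hx, hy, hxy, hhh⟩ :=
    exists_root_sl2_form_ne_zero S.H S.form S.form_nondeg S.form_invariant
  have hh0 : (h : g) ≠ 0 := fun h0 ↦ hhh (by simp [h0])
  by_cases hV : ∀ v : V, ⁅S.E 0 (h : g) 1, v⁆ = 0
  · intro a v
    have hE (n : ℤ) (b : A) (v : V) : ⁅S.E n (h : g) b, v⁆ = 0 := by
      rw [← hxy, ← S.E_zero_lie_E, lie_lie, S.E_zero_lie_eq_zero hh0 hV,
        S.E_zero_lie_eq_zero hh0 hV, lie_zero, sub_zero]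
    have hK := congrArg (⁅·, v⁆) (S.lie_EE 1 (-1) h h 1 a)
    simp only [lie_lie, hE, sub_zero, lie_self, map_zero, LinearMap.zero_apply,
      zero_add, if_true, Int.cast_one, one_mul, smul_lie] at hK
    exact (smul_eq_zero.mp hK.symm).resolve_left hhh
  have hα0 : α ≠ 0 := fun h0 ↦ by simp [h0] at hαh
  have hxroot : x ∈ S.rootSp α := (S.rootSp_def α x).mpr hx
  have hyroot : y ∈ S.rootSp (-α) := (S.rootSp_def (-α) y).mpr hy
  have hxn (n : ℤ) (v : V) := hnil α hα0 ((Submodule.ne_bot_iff _).mpr ⟨x, hxroot, hx0⟩)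
    x hxroot n 1 v
  have hyn (n : ℤ) (v : V) := hnil (-α) (neg_ne_zero.mpr hα0)
    ((Submodule.ne_bot_iff _).mpr ⟨y, hyroot, hy0⟩) y hyroot n 1 v
  obtain ⟨χ, hχ, hχh⟩ : ∃ χ, S.wtSpace V χ ≠ ⊥ ∧ χ (S.eH h) ≠ 0 := by
    by_contra! hcon
    refine hV fun v ↦ ?_
    have hle : (⨆ χ, S.wtSpace V χ) ≤ LinearMap.ker (LieModule.toEnd ℂ L V (S.E 0 (h : g) 1)) := by
      refine iSup_le fun χ ↦ ?_
      by_cases hbot : S.wtSpace V χ = ⊥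
      · rw [hbot]; exact bot_le
      · intro u hu
        have hu' : ⁅S.E 0 (h : g) 1, u⁆ = χ (S.eH h) • u := hu (S.eH h)
        rw [hcon χ hbot, zero_smul] at hu'
        exact hu'
    rw [hwt] at hle
    exact hle (Submodule.mem_top (x := v))
  obtain ⟨p, μ, γ, hp, hle⟩ := S.exists_wtSpace_le_jointEigenspace (V := V) χ
  obtain ⟨w, hw, hw0⟩ := (Submodule.ne_bot_iff _).mp hχ
  have hw' := hle hw
  obtain ⟨h1, h2, h3⟩ := S.toEnd_sl2_relations hK0 hxy (by rw [hx, hαh])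
    (by rw [hy, LinearMap.neg_apply, hαh]) 0
  obtain ⟨m, hm⟩ := sl2_weight_int h1 h2 h3 hw0 (hw'.1 h) (hxn _ _) (hyn _ _)
  have hm0 : m ≠ 0 := by
    rintro rfl
    exact hχh (by rw [← hp, hm, Int.cast_zero])
  obtain ⟨d, hd⟩ := S.exists_finrank_jointEigenspace_le hfd hK0 hαh hx hy hxy hxn hyn hm hm0 μ γ
  have hhH (k : S.H) : ⁅(k : g), (h : g)⁆ = (0 : Module.Dual ℂ S.H) k • (h : g) := by
    rw [LinearMap.zero_apply, zero_smul]
    exact congrArg Subtype.val (trivial_lie_zero S.H S.H k h)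
  have hshift (n : ℤ) (b : A) (j : ℤ) (v : V) (hv : v ∈ S.jointEigenspace V p (μ + j) γ) :
      LieModule.toEnd ℂ L V (S.E n (h : g) b) v ∈
        S.jointEigenspace V p (μ + ((j + n : ℤ) : ℂ)) γ := by
    have := S.lie_E_mem_jointEigenspace hhH n b hv
    rwa [add_zero, add_assoc, ← Int.cast_add] at this
  intro a
  choose k hk using fun b ↦ S.exists_K_eq_smul (V := V) hwt hfd b
  by_cases hka : k a = 0
  · intro v
    rw [hk, hka, zero_smul]
  exfalso
  have hfin (j : ℤ) := S.finiteDimensional_jointEigenspace hfd hK0 p (μ + j) γ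
  refine heisenberg_not_bounded (fun j : ℤ ↦ S.jointEigenspace V p (μ + j) γ) d hd ?_
    (fun n ↦ LieModule.toEnd ℂ L V (S.E (n + 1) (h : g) 1))
    (fun n ↦ LieModule.toEnd ℂ L V (S.E (-(n + 1)) (h : g) a))
    (fun n ↦ hshift _ _) (fun n ↦ hshift _ _) (fun n m ↦ ?_) (fun n m ↦ ?_) (fun n m hnm ↦ ?_)
    (c := S.form h h * k a) (mul_ne_zero hhh hka) (fun n ↦ ?_)
  · exact (Submodule.ne_bot_iff _).mpr ⟨w, by simpa using hw', hw0⟩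
  · have := S.toEnd_E_mul_sub (V := V) h (n + 1) (m + 1) 1 1 (hk _)
    rw [if_neg (by omega), zero_mul, zero_smul] at this
    exact sub_eq_zero.mp this
  · have := S.toEnd_E_mul_sub (V := V) h (-(n + 1)) (-(m + 1)) a a (hk _)
    rw [if_neg (by omega), zero_mul, zero_smul] at this
    exact sub_eq_zero.mp this
  · have := S.toEnd_E_mul_sub (V := V) h (n + 1) (-(m + 1)) 1 a (hk _)
    rw [if_neg (by omega), zero_mul, zero_smul] at this
    exact sub_eq_zero.mp this
  · have := S.toEnd_E_mul_sub (V := V) h (n + 1) (-(n + 1)) 1 a (hk _)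
    rw [if_pos rfl, one_mul] at this
    rw [this]
    push_cast
    rw [mul_assoc]
end

section
/- Let V be an irreducible integrable 𝔏(A)-module with finite-dimensional weight spaces on which the affine center K⊗1 acts trivially. Then there exists a cofinite ideal I of A such that (g'⊗I)·V = 0, where g' = g̊⊗ℂ[t,t⁻¹] ⊕ ℂK. -/
namespace LocallyNilpotent

variable {V : Type*} [AddCommGroup V] [Module ℂ V]

/-- The formal exponential of a locally nilpotent endomorphism, evaluated at a vector. -/
noncomputable def expApply (x : Module.End ℂ V) (v : V) : V :=
  ∑ᶠ n : ℕ, ((n.factorial : ℂ)⁻¹) • (x ^ n) v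

lemma pow_apply_eq_zero_of_le {x : Module.End ℂ V} {v : V} {N M : ℕ} (h : (x ^ N) v = 0)
    (hNM : N ≤ M) : (x ^ M) v = 0 := by
  obtain ⟨k, rfl⟩ := Nat.exists_eq_add_of_le' hNM
  rw [pow_add, Module.End.mul_apply, h, map_zero]

lemma expApply_eq_sum {x : Module.End ℂ V} {v : V} {N : ℕ} (h : (x ^ N) v = 0) :
    expApply x v = ∑ n ∈ Finset.range N, ((n.factorial : ℂ)⁻¹) • (x ^ n) v := by
  refine finsum_eq_sum_of_support_subset _ fun n hn ↦ ?_
  by_contra hlt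
  refine hn ?_
  have : N ≤ n := by simpa using hlt
  simp only [pow_apply_eq_zero_of_le h this, smul_zero]

lemma expApply_smul (x : Module.End ℂ V) (c : ℂ) (v : V) :
    expApply x (c • v) = c • expApply x v := by
  simp only [expApply, map_smul, smul_comm _ c, smul_finsum]

lemma exists_pow_ne_zero {x : Module.End ℂ V} {v : V} (hv : v ≠ 0)
    (h : ∃ N : ℕ, (x ^ N) v = 0) : ∃ N : ℕ, (x ^ N) v ≠ 0 ∧ (x ^ (N + 1)) v = 0 := by
  classical
  have hpos : Nat.find h ≠ 0 := by
    intro h0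
    have := Nat.find_spec h
    rw [h0] at this
    exact hv (by simpa using this)
  obtain ⟨N, hN⟩ := Nat.exists_eq_succ_of_ne_zero hpos
  exact ⟨N, Nat.find_min h (by omega), by have := Nat.find_spec h; rwa [hN] at this⟩

lemma eq_zero_of_expApply_eq_zero {x : Module.End ℂ V} {v : V}
    (h : ∃ N : ℕ, (x ^ N) v = 0) (hv : expApply x v = 0) : v = 0 := by
  by_contra hne
  obtain ⟨N, hN, hN'⟩ := exists_pow_ne_zero hne h
  apply hN
  rw [expApply_eq_sum hN'] at hv
  have := congrArg (x ^ N) hv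
  rw [map_zero, map_sum, Finset.sum_range_succ'] at this
  rw [Finset.sum_eq_zero, zero_add] at this
  · simpa using this
  · intro n _
    rw [map_smul, ← Module.End.mul_apply, ← pow_add,
      pow_apply_eq_zero_of_le hN' (by omega), smul_zero]

lemma mul_pow_eq {x y z w : Module.End ℂ V} (hz : x * y - y * x = z) (hw : x * z - z * x = w)
    (hxw : x * w = w * x) (n : ℕ) :
    y * x ^ (n + 2) = x ^ (n + 2) * y - ((n : ℂ) + 2) • (x ^ (n + 1) * z)
      + (((n : ℂ) + 2) * ((n : ℂ) + 1) / 2) • (x ^ n * w) := by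
  have hy : y * x = x * y - z := by rw [← hz]; abel
  have hz' : z * x = x * z - w := by rw [← hw]; abel
  induction n with
  | zero =>
    simp only [pow_zero, zero_add, pow_one, pow_two, ← mul_assoc, hy, sub_mul, one_mul]
    simp only [mul_assoc, hy, hz', mul_sub]
    norm_num [two_smul]
    abel
  | succ n ih =>
    have h1 : x ^ (n + 2) * y * x = x ^ (n + 3) * y - x ^ (n + 2) * z := by
      rw [mul_assoc, hy, mul_sub, ← mul_assoc, ← pow_succ]
    have h2 : x ^ (n + 1) * z * x = x ^ (n + 2) * z - x ^ (n + 1) * w := by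
      rw [mul_assoc, hz', mul_sub, ← mul_assoc, ← pow_succ]
    have h3 : x ^ n * w * x = x ^ (n + 1) * w := by
      rw [mul_assoc, ← hxw, ← mul_assoc, ← pow_succ]
    have : y * x ^ (n + 1 + 2) = (y * x ^ (n + 2)) * x := by rw [mul_assoc, ← pow_succ]
    rw [this, ih, add_mul, sub_mul, smul_mul_assoc, smul_mul_assoc, h1, h2, h3]
    push_cast
    module

/-- Conjugation by the exponential of a locally nilpotent endomorphism `x`, on an endomorphism
killed by `(ad x)³`. -/
lemma apply_expApply {x y z w : Module.End ℂ V} (hx : ∀ v, ∃ N : ℕ, (x ^ N) v = 0)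
    (hz : x * y - y * x = z) (hw : x * z - z * x = w) (hxw : x * w = w * x) (v : V) :
    y (expApply x v) = expApply x (y v - z v + (2⁻¹ : ℂ) • w v) := by
  obtain ⟨N₀, h₀⟩ := hx v
  obtain ⟨N₁, h₁⟩ := hx (y v)
  obtain ⟨N₂, h₂⟩ := hx (z v)
  obtain ⟨N₃, h₃⟩ := hx (w v)
  set N := N₀ + N₁ + N₂ + N₃ with hN
  have e₀ : (x ^ (N + 2)) v = 0 := pow_apply_eq_zero_of_le h₀ (by omega)
  have e₁ : ∀ M, N ≤ M → (x ^ M) (y v) = 0 := fun M h ↦ pow_apply_eq_zero_of_le h₁ (by omega)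
  have e₂ : ∀ M, N ≤ M → (x ^ M) (z v) = 0 := fun M h ↦ pow_apply_eq_zero_of_le h₂ (by omega)
  have e₃ : ∀ M, N ≤ M → (x ^ M) (w v) = 0 := fun M h ↦ pow_apply_eq_zero_of_le h₃ (by omega)
  have eR : (x ^ (N + 2)) (y v - z v + (2⁻¹ : ℂ) • w v) = 0 := by
    simp [e₁ _ (Nat.le_add_right N 2), e₂ _ (Nat.le_add_right N 2), e₃ _ (Nat.le_add_right N 2)]
  have key : ∀ n : ℕ, y ((((n + 2).factorial : ℂ)⁻¹) • (x ^ (n + 2)) v) =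
      (((n + 2).factorial : ℂ)⁻¹) • (x ^ (n + 2)) (y v)
        - (((n + 1).factorial : ℂ)⁻¹) • (x ^ (n + 1)) (z v)
        + (2⁻¹ : ℂ) • ((n.factorial : ℂ)⁻¹) • (x ^ n) (w v) := by
    intro n
    rw [map_smul, ← Module.End.mul_apply, mul_pow_eq hz hw hxw]
    simp only [LinearMap.add_apply, LinearMap.sub_apply, LinearMap.smul_apply,
      Module.End.mul_apply, Nat.factorial_succ, smul_add, smul_sub, smul_smul]
    have h1 : (n : ℂ) + 1 ≠ 0 := by exact_mod_cast Nat.succ_ne_zero n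
    have h2 : (n : ℂ) + 2 ≠ 0 := by exact_mod_cast Nat.succ_ne_zero (n + 1)
    have h4 : (n : ℂ) + 1 + 1 ≠ 0 := by exact_mod_cast Nat.succ_ne_zero (n + 1)
    have h3 : (n.factorial : ℂ) ≠ 0 := by exact_mod_cast Nat.factorial_ne_zero n
    have h5 : (n : ℂ) + 2 = (n : ℂ) + 1 + 1 := by ring
    rw [h5]
    congr 2
    · congr 1
      push_cast
      field_simp
    · push_cast
      field_simp
  rw [expApply_eq_sum e₀, expApply_eq_sum eR, map_sum, Finset.sum_range_succ',
    Finset.sum_range_succ']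
  simp only [add_assoc, Nat.reduceAdd, key]
  have hy1 : y (x v) = x (y v) - z v := by rw [← hz]; simp
  have s1 : ∑ n ∈ Finset.range (N + 2), ((n.factorial : ℂ)⁻¹) • (x ^ n) (y v) =
      ∑ n ∈ Finset.range N, (((n + 2).factorial : ℂ)⁻¹) • (x ^ (n + 2)) (y v) + x (y v) + y v := by
    rw [Finset.sum_range_succ', Finset.sum_range_succ']
    simp
  have s2 : ∑ n ∈ Finset.range (N + 2), ((n.factorial : ℂ)⁻¹) • (x ^ n) (z v) =
      ∑ n ∈ Finset.range N, (((n + 1).factorial : ℂ)⁻¹) • (x ^ (n + 1)) (z v) + z v := by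
    rw [Finset.sum_range_succ, e₂ _ (Nat.le_succ N), smul_zero, add_zero, Finset.sum_range_succ']
    simp
  have s3 : ∑ n ∈ Finset.range (N + 2), ((n.factorial : ℂ)⁻¹) • (x ^ n) (w v) =
      ∑ n ∈ Finset.range N, ((n.factorial : ℂ)⁻¹) • (x ^ n) (w v) := by
    rw [Finset.sum_range_succ, Finset.sum_range_succ, e₃ _ (Nat.le_succ N), e₃ _ le_rfl]
    simp
  have s : ∑ n ∈ Finset.range (N + 2),
      ((n.factorial : ℂ)⁻¹) • (x ^ n) (y v - z v + (2⁻¹ : ℂ) • w v) =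
      ∑ n ∈ Finset.range (N + 2), ((n.factorial : ℂ)⁻¹) • (x ^ n) (y v)
        - ∑ n ∈ Finset.range (N + 2), ((n.factorial : ℂ)⁻¹) • (x ^ n) (z v)
        + (2⁻¹ : ℂ) • ∑ n ∈ Finset.range (N + 2), ((n.factorial : ℂ)⁻¹) • (x ^ n) (w v) := by
    rw [Finset.smul_sum, ← Finset.sum_sub_distrib, ← Finset.sum_add_distrib]
    refine Finset.sum_congr rfl fun n _ ↦ ?_
    simp only [map_add, map_sub, map_smul, smul_add, smul_sub, smul_comm (2⁻¹ : ℂ)]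
  rw [s, s1, s2, s3, Finset.sum_add_distrib, Finset.sum_sub_distrib, ← Finset.smul_sum]
  simp only [Nat.factorial_one, Nat.cast_one, inv_one, pow_one, one_smul,
    Nat.factorial_zero, pow_zero, Module.End.one_apply, hy1]
  abel

/-- The operator `exp e exp (-f) exp e` attached to an `𝔰𝔩₂`-pair. -/
noncomputable def reflApply (e f : Module.End ℂ V) (v : V) : V :=
  expApply e (expApply (-f) (expApply e v))

lemma reflApply_smul (e f : Module.End ℂ V) (c : ℂ) (v : V) :
    reflApply e f (c • v) = c • reflApply e f v := by
  simp only [reflApply, expApply_smul]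

lemma exists_neg_pow_apply_eq_zero {f : Module.End ℂ V} (hf : ∀ v, ∃ N : ℕ, (f ^ N) v = 0)
    (v : V) : ∃ N : ℕ, ((-f) ^ N) v = 0 := by
  obtain ⟨N, hN⟩ := hf v
  refine ⟨N, ?_⟩
  rw [neg_pow, (Commute.pow_pow (Commute.neg_one_left f) N N).eq, Module.End.mul_apply]
  rcases neg_one_pow_eq_or (Module.End ℂ V) N with h | h <;> simp [h, hN]

lemma eq_zero_of_reflApply_eq_zero {e f : Module.End ℂ V}
    (he : ∀ v, ∃ N : ℕ, (e ^ N) v = 0) (hf : ∀ v, ∃ N : ℕ, (f ^ N) v = 0) {v : V}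
    (hv : reflApply e f v = 0) : v = 0 :=
  eq_zero_of_expApply_eq_zero (he _) <|
    eq_zero_of_expApply_eq_zero (exists_neg_pow_apply_eq_zero hf _) <|
      eq_zero_of_expApply_eq_zero (he _) hv

set_option linter.unusedSimpArgs false in
lemma apply_reflApply {e f : Module.End ℂ V}
    (he : ∀ v, ∃ N : ℕ, (e ^ N) v = 0) (hf : ∀ v, ∃ N : ℕ, (f ^ N) v = 0)
    {Y X Z F : Module.End ℂ V} {c : ℂ}
    (heY : e * Y - Y * e = -(c • X)) (heX : e * X - X * e = 0)
    (heZ : e * Z - Z * e = -((2 : ℂ) • X))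
    (hfY : f * Y - Y * f = c • F) (hfF : f * F - F * f = 0)
    (hfX : f * X - X * f = -Z) (hfZ : f * Z - Z * f = (2 : ℂ) • F) (v : V) :
    Y (reflApply e f v) = reflApply e f (Y v - c • Z v) := by
  have h1 : ∀ u, Y (expApply e u) = expApply e ((Y + c • X) u) := by
    intro u
    rw [apply_expApply (z := -(c • X)) (w := 0) he heY _ (by simp)]
    · simp
    · simp only [mul_add, add_mul, mul_sub, sub_mul, mul_neg, neg_mul, mul_smul_comm,
        smul_mul_assoc, mul_zero, zero_mul]
      linear_combination (norm := module) (-c) • heX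
  have h2 : ∀ u, (Y + c • X) (expApply (-f) u) = expApply (-f) ((Y + c • X - c • Z) u) := by
    intro u
    rw [apply_expApply (z := -(c • F) + c • Z) (w := -((2 * c) • F))
      (exists_neg_pow_apply_eq_zero hf) _ _ _]
    · congr 1
      simp only [LinearMap.add_apply, LinearMap.sub_apply, LinearMap.smul_apply,
        LinearMap.neg_apply]
      module
    · simp only [mul_add, add_mul, mul_sub, sub_mul, mul_neg, neg_mul, mul_smul_comm,
        smul_mul_assoc, mul_zero, zero_mul]
      linear_combination (norm := module) (-1 : ℂ) • hfY - c • hfX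
    · simp only [mul_add, add_mul, mul_sub, sub_mul, mul_neg, neg_mul, mul_smul_comm,
        smul_mul_assoc, mul_zero, zero_mul]
      linear_combination (norm := module) c • hfF - c • hfZ
    · simp only [mul_add, add_mul, mul_sub, sub_mul, mul_neg, neg_mul, mul_smul_comm,
        smul_mul_assoc, mul_zero, zero_mul]
      linear_combination (norm := module) (2 * c) • hfF
  have h3 : ∀ u, (Y + c • X - c • Z) (expApply e u) = expApply e ((Y - c • Z) u) := by
    intro u
    rw [apply_expApply (z := c • X) (w := 0) he _ _ (by simp)]
    · congr 1
      simp only [LinearMap.add_apply, LinearMap.sub_apply, LinearMap.smul_apply,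
        LinearMap.zero_apply]
      module
    · simp only [mul_add, add_mul, mul_sub, sub_mul, mul_neg, neg_mul, mul_smul_comm,
        smul_mul_assoc, mul_zero, zero_mul]
      linear_combination (norm := module) (1 : ℂ) • heY + c • heX - c • heZ
    · simp only [mul_add, add_mul, mul_sub, sub_mul, mul_neg, neg_mul, mul_smul_comm,
        smul_mul_assoc, mul_zero, zero_mul]
      linear_combination (norm := module) c • heX
  rw [reflApply, h1, h2, h3]
  rfl

lemma primitive_vector {e f h : Module.End ℂ V} (hef : e * f - f * e = h)
    (hhf : h * f - f * h = -((2 : ℂ) • f)) {v : V} {r : ℂ} (hv : h v = r • v) (hev : e v = 0)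
    (hne : v ≠ 0) (hf : ∃ N : ℕ, (f ^ N) v = 0) : ∃ k : ℕ, r = k ∧ (f ^ (k + 1)) v = 0 := by
  have h1 : ∀ n : ℕ, h ((f ^ n) v) = (r - 2 * n) • (f ^ n) v := by
    intro n
    induction n with
    | zero => simpa using hv
    | succ n ih =>
      have := congrArg (fun φ : Module.End ℂ V ↦ φ ((f ^ n) v)) hhf
      simp only [LinearMap.sub_apply, Module.End.mul_apply, ih, LinearMap.neg_apply,
        LinearMap.smul_apply, map_smul, sub_eq_iff_eq_add] at this
      rw [pow_succ', Module.End.mul_apply, this]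
      push_cast
      module
  have h2 : ∀ n : ℕ, e ((f ^ (n + 1)) v) = (((n : ℂ) + 1) * (r - n)) • (f ^ n) v := by
    intro n
    have key : ∀ u, e (f u) = f (e u) + h u := by
      intro u
      rw [← hef]
      simp
    induction n with
    | zero => simp [key, hev, hv]
    | succ n ih =>
      rw [pow_succ', Module.End.mul_apply, key, ih, map_smul, ← Module.End.mul_apply, ← pow_succ',
        h1]
      push_cast
      module
  obtain ⟨N, hN, hN'⟩ := exists_pow_ne_zero hne hf
  have := h2 N
  rw [hN', map_zero, eq_comm, smul_eq_zero_iff_left hN, mul_eq_zero] at this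
  rcases this with h | h
  · exact absurd h (by exact_mod_cast Nat.succ_ne_zero N)
  · exact ⟨N, by linear_combination h, hN'⟩

/-- The weights of an `𝔰𝔩₂`-pair acting locally nilpotently are integers. -/
lemma exists_int_of_eigenvector {e f h : Module.End ℂ V} (hef : e * f - f * e = h)
    (hhe : h * e - e * h = (2 : ℂ) • e) (hhf : h * f - f * h = -((2 : ℂ) • f))
    (he : ∀ v, ∃ N : ℕ, (e ^ N) v = 0) (hf : ∀ v, ∃ N : ℕ, (f ^ N) v = 0)
    {v : V} {r : ℂ} (hv : h v = r • v) (hne : v ≠ 0) : ∃ z : ℤ, r = z := by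
  have h1 : ∀ n : ℕ, h ((e ^ n) v) = (r + 2 * n) • (e ^ n) v := by
    intro n
    induction n with
    | zero => simpa using hv
    | succ n ih =>
      have := congrArg (fun φ : Module.End ℂ V ↦ φ ((e ^ n) v)) hhe
      simp only [LinearMap.sub_apply, Module.End.mul_apply, ih,
        LinearMap.smul_apply, map_smul, sub_eq_iff_eq_add] at this
      rw [pow_succ', Module.End.mul_apply, this]
      push_cast
      module
  obtain ⟨N, hN, hN'⟩ := exists_pow_ne_zero hne (he v)
  obtain ⟨k, hk, -⟩ := primitive_vector hef hhf (h1 N)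
    (by rwa [← Module.End.mul_apply, ← pow_succ']) hN (hf _)
  exact ⟨(k : ℤ) - 2 * N, by push_cast; linear_combination hk⟩

end LocallyNilpotent

namespace LoopAffVir

variable {g A L : Type*} [LieRing g] [LieAlgebra ℂ g] [CommRing A] [Algebra ℂ A]
  [LieRing L] [LieAlgebra ℂ L]

/-- A choice of root vectors `x i ∈ g̊_α`, `y i ∈ g̊_{-α}` with coroots `h i = ⁅x i, y i⁆`. -/
structure RootVectors (S : LoopAffVir g A L) (ι : Type*) where
  /-- the roots -/
  root : ι → Module.Dual ℂ S.H
  /-- root vectors -/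
  x : ι → g
  /-- opposite root vectors -/
  y : ι → g
  /-- coroots -/
  h : ι → S.H
  lie_xy : ∀ i, ⁅x i, y i⁆ = h i
  root_h : ∀ i, root i (h i) = 2
  lie_hx : ∀ i (k : S.H), ⁅(k : g), x i⁆ = root i k • x i
  lie_hy : ∀ i (k : S.H), ⁅(k : g), y i⁆ = -(root i k • y i)
  lie_hh : ∀ k l : S.H, ⁅(k : g), (l : g)⁆ = 0
  span_h : Submodule.span ℂ (Set.range h) = ⊤
  span_x : S.H.toSubmodule ⊔ Submodule.span ℂ (Set.range x) = ⊤

lemma exists_rootVectors.{u} {g : Type u} [LieRing g] [LieAlgebra ℂ g] [FiniteDimensional ℂ g]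
    [LieAlgebra.IsSimple ℂ g] (S : LoopAffVir g A L) :
    ∃ ι : Type u, Finite ι ∧ Nonempty (S.RootVectors ι) := by
  have := S.isCartan
  choose h x y ht hx hy using fun α : S.H.root ↦
    LieAlgebra.IsKilling.exists_isSl2Triple_of_weight_isNonZero (S.H.isNonZero_coe_root α)
  have hh : ∀ α : S.H.root, h α = LieAlgebra.IsKilling.coroot (α : LieModule.Weight ℂ S.H g) :=
    fun α ↦ (ht α).h_eq_coroot (S.H.isNonZero_coe_root α) (hx α) (hy α)
  have hx0 : ∀ α, x α ≠ 0 := fun α ↦ (ht α).e_ne_zero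
  have lie_hx : ∀ (α : S.H.root) (k : S.H),
      ⁅(k : g), x α⁆ = (LieModule.Weight.toLinear ℂ S.H g α) k • x α :=
    fun α k ↦ LieAlgebra.IsKilling.lie_eq_smul_of_mem_rootSpace (hx α) k
  refine ⟨S.H.root, inferInstance, ⟨{
    root := fun α ↦ (LieModule.Weight.toLinear ℂ S.H g α)
    x := x
    y := y
    h := fun α ↦ LieAlgebra.IsKilling.coroot (α : LieModule.Weight ℂ S.H g)
    lie_xy := fun α ↦ (ht α).lie_e_f.trans (hh α)
    root_h := fun α ↦ LieAlgebra.IsKilling.root_apply_coroot (S.H.isNonZero_coe_root α)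
    lie_hx := lie_hx
    lie_hy := fun α k ↦ by
      rw [← neg_smul]
      exact LieAlgebra.IsKilling.lie_eq_smul_of_mem_rootSpace (hy α) k
    lie_hh := fun k l ↦ by
      have := trivial_lie_zero S.H S.H k l
      rw [← LieSubalgebra.coe_bracket, this, ZeroMemClass.coe_zero]
    span_h := RootPairing.IsRootSystem.span_coroot_eq_top
      (P := LieAlgebra.IsKilling.rootSystem S.H)
    span_x := ?_ }⟩⟩
  have htop := LieAlgebra.cartan_sup_iSup_rootSpace_eq_top (H := S.H)
  have := congrArg LieSubmodule.toSubmodule htop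
  rw [eq_top_iff, ← LieSubmodule.top_toSubmodule (R := ℂ) (L := S.H) (M := g), ← this]
  simp only [LieSubmodule.sup_toSubmodule, LieSubmodule.iSup_toSubmodule]
  refine sup_le_sup le_rfl (iSup₂_le fun α hα z hz ↦ ?_)
  have hα' : α ∈ S.H.root := by simpa using hα
  have hfr : Module.finrank ℂ (LieAlgebra.rootSpace S.H α) = 1 :=
    LieAlgebra.IsKilling.finrank_rootSpace_eq_one α hα
  have hne : (⟨x ⟨α, hα'⟩, hx ⟨α, hα'⟩⟩ : LieAlgebra.rootSpace S.H α) ≠ 0 :=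
    fun h0 ↦ hx0 ⟨α, hα'⟩ (congrArg Subtype.val h0)
  obtain ⟨c, hc⟩ := (finrank_eq_one_iff_of_nonzero' _ hne).mp hfr ⟨z, hz⟩
  have hc' : c • x ⟨α, hα'⟩ = z := congrArg Subtype.val hc
  rw [← hc']
  exact Submodule.smul_mem _ _ (Submodule.subset_span ⟨_, rfl⟩)

namespace RootVectors

variable {S : LoopAffVir g A L} {ι : Type*} (R : S.RootVectors ι)

include R

lemma root_ne_zero (i : ι) : R.root i ≠ 0 := fun h ↦ by
  simpa [h] using R.root_h i

lemma x_ne_zero (i : ι) : R.x i ≠ 0 := fun h ↦ by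
  have h1 := R.lie_xy i
  have h2 := R.root_h i
  rw [h, zero_lie, eq_comm, ZeroMemClass.coe_eq_zero] at h1
  simp [h1] at h2

lemma y_ne_zero (i : ι) : R.y i ≠ 0 := fun h ↦ by
  have h1 := R.lie_xy i
  have h2 := R.root_h i
  rw [h, lie_zero, eq_comm, ZeroMemClass.coe_eq_zero] at h1
  simp [h1] at h2

lemma x_mem (i : ι) : R.x i ∈ S.rootSp (R.root i) :=
  (S.rootSp_def _ _).mpr fun k ↦ R.lie_hx i k

lemma y_mem (i : ι) : R.y i ∈ S.rootSp (-R.root i) :=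
  (S.rootSp_def _ _).mpr fun k ↦ by simp [R.lie_hy i k]

lemma form_hx (i : ι) (k : S.H) : S.form k (R.x i) = 0 := by
  have h1 := S.form_invariant (k : g) (R.h i) (R.x i)
  rw [R.lie_hh, R.lie_hx, R.root_h] at h1
  simpa using h1.symm

lemma form_hy (i : ι) (k : S.H) : S.form k (R.y i) = 0 := by
  have h1 := S.form_invariant (k : g) (R.h i) (R.y i)
  rw [R.lie_hh, R.lie_hy, R.root_h] at h1
  simpa using h1.symm

lemma form_xx (i : ι) : S.form (R.x i) (R.x i) = 0 := by
  have h1 := S.form_invariant (R.h i : g) (R.x i) (R.x i)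
  rw [lie_self, R.lie_hx, R.root_h] at h1
  simpa using h1

lemma form_yy (i : ι) : S.form (R.y i) (R.y i) = 0 := by
  have h1 := S.form_invariant (R.h i : g) (R.y i) (R.y i)
  rw [lie_self, R.lie_hy, R.root_h] at h1
  simpa using h1

lemma exists_form_ne_zero (i : ι) : ∃ k l : S.H, S.form k l ≠ 0 := by
  by_contra! h
  have h0 : (R.h i : g) = 0 := by
    refine S.form_nondeg _ fun z ↦ ?_
    have hz : z ∈ S.H.toSubmodule ⊔ Submodule.span ℂ (Set.range R.x) := by
      rw [R.span_x]; trivial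
    have hle : S.H.toSubmodule ⊔ Submodule.span ℂ (Set.range R.x) ≤
        LinearMap.ker (S.form (R.h i)) := by
      refine sup_le (fun l hl ↦ h _ ⟨l, hl⟩) (Submodule.span_le.mpr ?_)
      rintro _ ⟨j, rfl⟩
      exact R.form_hx j _
    exact hle hz
  have h2 := R.root_h i
  rw [ZeroMemClass.coe_eq_zero] at h0
  simp [h0] at h2

end RootVectors

end LoopAffVir

namespace LoopAffVir

lemma lie_lie_of_eq {L V : Type*} [LieRing L] [AddCommGroup V] [LieRingModule L V] {y z w : L}
    (h : ⁅y, z⁆ = w) (v : V) : ⁅y, ⁅z, v⁆⁆ = ⁅w, v⁆ + ⁅z, ⁅y, v⁆⁆ := by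
  rw [← h, leibniz_lie]

variable {g A L : Type*} [LieRing g] [LieAlgebra ℂ g] [CommRing A] [Algebra ℂ A]
  [LieRing L] [LieAlgebra ℂ L] (S : LoopAffVir g A L)

lemma lie_E0_E (n : ℤ) (x y : g) (a b : A) : ⁅S.E 0 x a, S.E n y b⁆ = S.E n ⁅x, y⁆ (a * b) := by
  simp [S.lie_EE]

lemma lie_D0_D (k : ℤ) (a b : A) : ⁅S.D 0 a, S.D k b⁆ = (k : ℂ) • S.D k (a * b) := by
  simp [S.lie_DD]

lemma lie_E0_D (k : ℤ) (x : g) (a b : A) : ⁅S.E 0 x a, S.D k b⁆ = 0 := by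
  rw [← lie_skew, S.lie_DE]
  simp

variable {V : Type*} [AddCommGroup V] [Module ℂ V] [LieRingModule L V] [LieModule ℂ L V]

variable (V) in
/-- The joint eigenspace of `h̊`, `d₀` and `C` for the eigenvalues `μ`, `ν` and `γ`. -/
def layer (γ : ℂ) (μ : Module.Dual ℂ S.H) (ν : ℂ) : Submodule ℂ V where
  carrier := {v | (∀ h : S.H, ⁅S.E 0 h 1, v⁆ = μ h • v) ∧ ⁅S.D 0 1, v⁆ = ν • v ∧
    ⁅S.C 1, v⁆ = γ • v}
  add_mem' := fun ha hb ↦ ⟨fun h ↦ by rw [lie_add, ha.1, hb.1, smul_add],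
    by rw [lie_add, ha.2.1, hb.2.1, smul_add], by rw [lie_add, ha.2.2, hb.2.2, smul_add]⟩
  zero_mem' := by simp
  smul_mem' := fun c v hv ↦ ⟨fun h ↦ by rw [lie_smul, hv.1, smul_comm],
    by rw [lie_smul, hv.2.1, smul_comm], by rw [lie_smul, hv.2.2, smul_comm]⟩

variable {S} {γ ν : ℂ} {μ : Module.Dual ℂ S.H}

lemma E_mem_layer {x : g} {β : Module.Dual ℂ S.H} (hx : ∀ h : S.H, ⁅(h : g), x⁆ = β h • x)
    (n : ℤ) (a : A) {v : V} (hv : v ∈ S.layer V γ μ ν) :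
    ⁅S.E n x a, v⁆ ∈ S.layer V γ (μ + β) (ν + n) := by
  refine ⟨fun h ↦ ?_, ?_, ?_⟩
  · rw [lie_lie_of_eq (S.lie_E0_E n h x 1 a), hx, hv.1]
    simp only [map_smul, LinearMap.smul_apply, one_mul, smul_lie, lie_smul, LinearMap.add_apply]
    module
  · rw [lie_lie_of_eq (S.lie_DE 0 n x 1 a), hv.2.1]
    simp only [one_mul, add_zero, smul_lie, lie_smul]
    module
  · rw [lie_lie_of_eq (S.C_central 1 _), hv.2.2, zero_lie, zero_add, lie_smul]

lemma EH_mem_layer (hab : ∀ k l : S.H, ⁅(k : g), (l : g)⁆ = 0) (h : S.H)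
    (n : ℤ) (a : A) {v : V} (hv : v ∈ S.layer V γ μ ν) :
    ⁅S.E n h a, v⁆ ∈ S.layer V γ μ (ν + n) := by
  simpa using E_mem_layer (β := 0) (fun k ↦ by simp [hab]) n a hv

lemma D_mem_layer (k : ℤ) (b : A) {v : V} (hv : v ∈ S.layer V γ μ ν) :
    ⁅S.D k b, v⁆ ∈ S.layer V γ μ (ν + k) := by
  refine ⟨fun h ↦ ?_, ?_, ?_⟩
  · rw [lie_lie_of_eq (S.lie_E0_D k h 1 b), hv.1, zero_lie, zero_add, lie_smul]
  · rw [lie_lie_of_eq (S.lie_D0_D k 1 b), hv.2.1]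
    simp only [one_mul, smul_lie, lie_smul]
    module
  · rw [lie_lie_of_eq (S.C_central 1 _), hv.2.2, zero_lie, zero_add, lie_smul]

lemma finiteDimensional_layer (hfin : S.HasFinDimWeightSpaces V)
    (hK0 : ∀ v : V, ⁅S.K 1, v⁆ = 0) (γ : ℂ) (μ : Module.Dual ℂ S.H) (ν : ℂ) :
    FiniteDimensional ℂ (S.layer V γ μ ν) := by
  by_cases hbot : S.layer V γ μ ν = ⊥
  · rw [hbot]
    infer_instance
  obtain ⟨v, hv, hv0⟩ := Submodule.exists_mem_ne_zero_of_ne_bot hbot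
  have key : ∀ z ∈ S.cartan, ∃ c : ℂ, ∀ u ∈ S.layer V γ μ ν, ⁅z, u⁆ = c • u := by
    intro z hz
    induction hz using Submodule.span_induction with
    | mem z hz =>
      rcases hz with ⟨h, hh, rfl⟩ | rfl | rfl | rfl
      · exact ⟨μ ⟨h, hh⟩, fun u hu ↦ hu.1 ⟨h, hh⟩⟩
      · exact ⟨0, fun u _ ↦ by rw [hK0, zero_smul]⟩
      · exact ⟨ν, fun u hu ↦ hu.2.1⟩
      · exact ⟨γ, fun u hu ↦ hu.2.2⟩
    | zero => exact ⟨0, fun u _ ↦ by rw [zero_lie, zero_smul]⟩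
    | add y z _ _ hy hz =>
      obtain ⟨c, hc⟩ := hy
      obtain ⟨d, hd⟩ := hz
      exact ⟨c + d, fun u hu ↦ by rw [add_lie, hc u hu, hd u hu, add_smul]⟩
    | smul t z _ hz =>
      obtain ⟨c, hc⟩ := hz
      exact ⟨t * c, fun u hu ↦ by rw [smul_lie, hc u hu, mul_smul]⟩
  choose! c hc using key
  let χ : Module.Dual ℂ S.cartan :=
    { toFun := fun z ↦ c z
      map_add' := fun y z ↦ smul_left_injective ℂ hv0 <| by
        simp only
        rw [← hc _ (y + z).2 v hv, Submodule.coe_add, add_lie, hc _ y.2 v hv, hc _ z.2 v hv,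
          add_smul]
      map_smul' := fun t z ↦ smul_left_injective ℂ hv0 <| by
        simp only [RingHom.id_apply, smul_eq_mul]
        rw [← hc _ (t • z).2 v hv, Submodule.coe_smul, smul_lie, hc _ z.2 v hv, mul_smul] }
  have := hfin χ
  exact Submodule.finiteDimensional_of_le (S₂ := S.wtSpace V χ) fun u hu z ↦ hc z z.2 u hu

end LoopAffVir

namespace LoopAffVir.RootVectors

open LocallyNilpotent LieModule

variable {g A L : Type*} [LieRing g] [LieAlgebra ℂ g] [CommRing A] [Algebra ℂ A]
  [LieRing L] [LieAlgebra ℂ L] {S : LoopAffVir g A L} {ι : Type*} (R : S.RootVectors ι)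
  {V : Type*} [AddCommGroup V] [Module ℂ V] [LieRingModule L V] [LieModule ℂ L V]

lemma toEnd_mul_sub (y z : L) :
    toEnd ℂ L V y * toEnd ℂ L V z - toEnd ℂ L V z * toEnd ℂ L V y = toEnd ℂ L V ⁅y, z⁆ := by
  ext v
  simp

include R in
lemma locNilp_x (hInt : S.IsIntegrable V) (i : ι) (n : ℤ) (a : A) (v : V) :
    ∃ N : ℕ, ((toEnd ℂ L V (S.E n (R.x i) a)) ^ N) v = 0 :=
  hInt.2.2 (R.root i) (R.root_ne_zero i)
    (fun h ↦ R.x_ne_zero i (by simpa [h] using R.x_mem i)) _ (R.x_mem i) n a v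

include R in
lemma locNilp_y (hInt : S.IsIntegrable V) (i : ι) (n : ℤ) (a : A) (v : V) :
    ∃ N : ℕ, ((toEnd ℂ L V (S.E n (R.y i) a)) ^ N) v = 0 :=
  hInt.2.2 (-R.root i) (neg_ne_zero.mpr (R.root_ne_zero i))
    (fun h ↦ R.y_ne_zero i (by simpa [h] using R.y_mem i)) _ (R.y_mem i) n a v

lemma lie_xh (i : ι) (k : S.H) : ⁅R.x i, (k : g)⁆ = -(R.root i k • R.x i) := by
  rw [← lie_skew, R.lie_hx]

lemma lie_yh (i : ι) (k : S.H) : ⁅R.y i, (k : g)⁆ = R.root i k • R.y i := by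
  rw [← lie_skew, R.lie_hy, neg_neg]

lemma lie_E_x_h (i : ι) (n k : ℤ) (h : S.H) (a b : A) :
    ⁅S.E n (R.x i) a, S.E k h b⁆ = -(R.root i h • S.E (n + k) (R.x i) (a * b)) := by
  rw [S.lie_EE, R.lie_xh, S.form_symm, R.form_hx]
  simp

lemma lie_E_y_h (i : ι) (n k : ℤ) (h : S.H) (a b : A) :
    ⁅S.E n (R.y i) a, S.E k h b⁆ = R.root i h • S.E (n + k) (R.y i) (a * b) := by
  rw [S.lie_EE, R.lie_yh, S.form_symm, R.form_hy]
  simp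

/-- The reflection attached to the real root `α_i + nδ`. -/
noncomputable def refl (i : ι) (n : ℤ) (v : V) : V :=
  reflApply (toEnd ℂ L V (S.E n (R.x i) 1)) (toEnd ℂ L V (S.E (-n) (R.y i) 1)) v

lemma lie_refl (hInt : S.IsIntegrable V) (hK0 : ∀ v : V, ⁅S.K 1, v⁆ = 0) (i : ι) (n k : ℤ)
    (a : A) (hka : k ≠ 0 ∨ a = 1) (Y : L) (c : ℂ)
    (hx : ⁅S.E n (R.x i) 1, Y⁆ = -(c • S.E (n + k) (R.x i) a))
    (hy : ⁅S.E (-n) (R.y i) 1, Y⁆ = c • S.E (-n + k) (R.y i) a) (v : V) :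
    ⁅Y, R.refl i n v⁆ = R.refl i n (⁅Y, v⁆ - c • ⁅S.E k (R.h i) a, v⁆) := by
  refine apply_reflApply (Y := toEnd ℂ L V Y) (X := toEnd ℂ L V (S.E (n + k) (R.x i) a))
    (Z := toEnd ℂ L V (S.E k (R.h i) a)) (F := toEnd ℂ L V (S.E (-n + k) (R.y i) a))
    (R.locNilp_x hInt i n 1) (R.locNilp_y hInt i (-n) 1) ?_ ?_ ?_ ?_ ?_ ?_ ?_ v <;>
    rw [toEnd_mul_sub]
  · rw [hx, map_neg, map_smul]
  · rw [S.lie_EE, lie_self, R.form_xx]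
    simp
  · rw [R.lie_E_x_h, R.root_h, one_mul, map_neg, map_smul]
  · rw [hy, map_smul]
  · rw [S.lie_EE, lie_self, R.form_yy]
    simp
  · rw [S.lie_EE, ← lie_skew, R.lie_xy]
    have hz : -n + (n + k) = k := by ring
    have h0 : toEnd ℂ L V ((if n + k = - -n then ((-n : ℤ) : ℂ) * S.form (R.y i) (R.x i) else 0) •
        S.K (1 * a)) = 0 := by
      rcases hka with hk | rfl
      · rw [if_neg (by omega), zero_smul, map_zero]
      · ext u
        rw [toEnd_apply_apply, smul_lie, one_mul, hK0, smul_zero, LinearMap.zero_apply]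
    rw [map_add, h0, add_zero, hz, one_mul]
    simp
  · rw [R.lie_E_y_h, R.root_h, one_mul, map_smul]

lemma lie_E_refl (hInt : S.IsIntegrable V) (hK0 : ∀ v : V, ⁅S.K 1, v⁆ = 0) (i : ι) (n k : ℤ)
    (a : A) (hka : k ≠ 0 ∨ a = 1) (h : S.H) (v : V) :
    ⁅S.E k h a, R.refl i n v⁆ =
      R.refl i n (⁅S.E k h a, v⁆ - R.root i h • ⁅S.E k (R.h i) a, v⁆) :=
  R.lie_refl hInt hK0 i n k a hka _ _ (by rw [R.lie_E_x_h, one_mul])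
    (by rw [R.lie_E_y_h, one_mul]) v

lemma refl_smul (i : ι) (n : ℤ) (c : ℂ) (v : V) : R.refl i n (c • v) = c • R.refl i n v :=
  reflApply_smul _ _ _ _

lemma refl_mem_layer (hInt : S.IsIntegrable V) (hK0 : ∀ v : V, ⁅S.K 1, v⁆ = 0) (i : ι) (n : ℤ)
    {γ ν : ℂ} {μ : Module.Dual ℂ S.H} {v : V} (hv : v ∈ S.layer V γ μ ν) :
    R.refl i n v ∈ S.layer V γ (μ - μ (R.h i) • R.root i) (ν - n * μ (R.h i)) := by
  refine ⟨fun h ↦ ?_, ?_, ?_⟩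
  · rw [R.lie_E_refl hInt hK0 i n 0 1 (.inr rfl), hv.1, hv.1, ← refl_smul]
    congr 1
    simp only [LinearMap.sub_apply, LinearMap.smul_apply, smul_eq_mul]
    module
  · rw [R.lie_refl hInt hK0 i n 0 1 (.inr rfl) (S.D 0 1) n, hv.2.1, hv.1, ← refl_smul]
    · congr 1
      module
    · rw [← lie_skew, S.lie_DE]
      simp
    · rw [← lie_skew, S.lie_DE]
      simp
  · rw [R.lie_refl hInt hK0 i n 0 1 (.inr rfl) (S.C 1) 0, hv.2.2, ← refl_smul]
    · simp
    · rw [← lie_skew, S.C_central]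
      simp
    · rw [← lie_skew, S.C_central]
      simp

lemma kills_of_kills_refl (hInt : S.IsIntegrable V) (hK0 : ∀ v : V, ⁅S.K 1, v⁆ = 0) (i : ι) (n : ℤ)
    {k : ℤ} (hk : k ≠ 0) (a : A) {γ ν : ℂ} {μ : Module.Dual ℂ S.H}
    (H : ∀ (h : S.H), ∀ u ∈ S.layer V γ (μ - μ (R.h i) • R.root i) (ν - n * μ (R.h i)),
      ⁅S.E k h a, u⁆ = 0) (h : S.H) {v : V} (hv : v ∈ S.layer V γ μ ν) : ⁅S.E k h a, v⁆ = 0 := by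
  have key : ∀ h : S.H, ⁅S.E k h a, v⁆ = R.root i h • ⁅S.E k (R.h i) a, v⁆ := fun h ↦ by
    have h1 := R.lie_E_refl hInt hK0 i n k a (.inl hk) h v
    rw [H h _ (R.refl_mem_layer hInt hK0 i n hv)] at h1
    exact sub_eq_zero.mp <| eq_zero_of_reflApply_eq_zero (R.locNilp_x hInt i n 1)
      (R.locNilp_y hInt i (-n) 1) h1.symm
  have h2 := key (R.h i)
  rw [R.root_h, two_smul, left_eq_add] at h2
  rw [key, h2, smul_zero]

/-- The operators `h ⊗ tᵏ ⊗ a`, `k ≠ 0`, kill a layer once they kill a translate of it. -/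
lemma kills_of_kills_translate (hInt : S.IsIntegrable V) (hK0 : ∀ v : V, ⁅S.K 1, v⁆ = 0) (i : ι)
    (n : ℤ) {k : ℤ} (hk : k ≠ 0) (a : A) {γ ν : ℂ} {μ : Module.Dual ℂ S.H}
    (H : ∀ (h : S.H), ∀ u ∈ S.layer V γ μ (ν - n * μ (R.h i)), ⁅S.E k h a, u⁆ = 0) (h : S.H)
    {v : V} (hv : v ∈ S.layer V γ μ ν) : ⁅S.E k h a, v⁆ = 0 := by
  refine R.kills_of_kills_refl hInt hK0 i n hk a (fun h u hu ↦ ?_) h hv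
  refine R.kills_of_kills_refl hInt hK0 i 0 hk a (fun h w hw ↦ H h w ?_) h hu
  convert hw using 1
  congr 1
  · simp only [LinearMap.sub_apply, LinearMap.smul_apply, R.root_h, smul_eq_mul]
    module
  · simp

end LoopAffVir.RootVectors

section Cofinite

variable {A : Type*} [CommRing A] [Algebra ℂ A]

lemma isCofiniteIdeal_of_ker_le {W : Type*} [AddCommGroup W] [Module ℂ W] [FiniteDimensional ℂ W]
    (φ : A →ₗ[ℂ] W) {I : Ideal A} (h : ∀ a, φ a = 0 → a ∈ I) : IsCofiniteIdeal I := by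
  have hφ : LinearMap.ker φ ≤ LinearMap.ker (Ideal.Quotient.mkₐ ℂ I).toLinearMap := fun a ha ↦
    Ideal.Quotient.eq_zero_iff_mem.mpr (h a ha)
  have : FiniteDimensional ℂ (A ⧸ LinearMap.ker φ) :=
    Module.Finite.equiv φ.quotKerEquivRange.symm
  refine Module.Finite.of_surjective ((LinearMap.ker φ).liftQ _ hφ) fun q ↦ ?_
  obtain ⟨a, rfl⟩ := Ideal.Quotient.mk_surjective q
  exact ⟨Submodule.Quotient.mk a, rfl⟩

lemma isCofiniteIdeal_top : IsCofiniteIdeal (⊤ : Ideal A) :=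
  isCofiniteIdeal_of_ker_le (0 : A →ₗ[ℂ] ℂ) fun _ _ ↦ trivial

lemma IsCofiniteIdeal.inf {I J : Ideal A} (hI : IsCofiniteIdeal I) (hJ : IsCofiniteIdeal J) :
    IsCofiniteIdeal (I ⊓ J) := by
  have : FiniteDimensional ℂ (A ⧸ I) := hI
  have : FiniteDimensional ℂ (A ⧸ J) := hJ
  refine isCofiniteIdeal_of_ker_le
    ((Ideal.Quotient.mkₐ ℂ I).toLinearMap.prod (Ideal.Quotient.mkₐ ℂ J).toLinearMap) fun a ha ↦ ?_
  exact ⟨Ideal.Quotient.eq_zero_iff_mem.mp (congrArg Prod.fst ha),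
    Ideal.Quotient.eq_zero_iff_mem.mp (congrArg Prod.snd ha)⟩

lemma IsCofiniteIdeal.mul_self [Algebra.FiniteType ℂ A] {I : Ideal A} (hI : IsCofiniteIdeal I) :
    IsCofiniteIdeal (I * I) := by
  have : FiniteDimensional ℂ (A ⧸ I) := hI
  have : IsNoetherianRing A := Algebra.FiniteType.isNoetherianRing ℂ A
  let f : (A ⧸ I * I) →ₐ[ℂ] A ⧸ I := Ideal.Quotient.factorₐ ℂ Ideal.mul_le_left
  refine Module.finite_of_surjective_of_ker_le_nilradical f
    (Ideal.Quotient.factor_surjective Ideal.mul_le_left) (fun q hq ↦ ?_)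
    (IsNoetherian.noetherian _)
  obtain ⟨a, rfl⟩ := Ideal.Quotient.mk_surjective q
  have ha : a ∈ I := Ideal.Quotient.eq_zero_iff_mem.mp hq
  refine mem_nilradical.mpr ⟨2, ?_⟩
  rw [← map_pow, Ideal.Quotient.eq_zero_iff_mem, pow_two]
  exact Ideal.mul_mem_mul ha ha

end Cofinite

namespace LoopAffVir

variable {g A L : Type*} [LieRing g] [LieAlgebra ℂ g] [CommRing A] [Algebra ℂ A]
  [LieRing L] [LieAlgebra ℂ L] {S : LoopAffVir g A L}
  {V : Type*} [AddCommGroup V] [Module ℂ V] [LieRingModule L V] [LieModule ℂ L V]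

lemma E_apply_eq_zero_of_mem_span {n : ℤ} {a : A} {v : V} {s : Set g}
    (hs : ∀ x ∈ s, ⁅S.E n x a, v⁆ = 0) {x : g} (hx : x ∈ Submodule.span ℂ s) :
    ⁅S.E n x a, v⁆ = 0 := by
  induction hx using Submodule.span_induction with
  | mem x hx => exact hs x hx
  | zero => simp
  | add x y _ _ hx hy => simp [hx, hy]
  | smul c x _ hx => simp [hx]

/-- In an irreducible module, `g' ⊗ I` kills everything as soon as it kills a nonzero vector. -/
lemma kills_of_kills_vector (hIrr : IsSimpleOrder (LieSubmodule ℂ L V)) {I : Ideal A} {v : V}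
    (hv0 : v ≠ 0) (hv : ∀ a ∈ I, (∀ (n : ℤ) (x : g), ⁅S.E n x a, v⁆ = 0) ∧ ⁅S.K a, v⁆ = 0) :
    ∀ a ∈ I, (∀ (n : ℤ) (x : g) (v : V), ⁅S.E n x a, v⁆ = 0) ∧ (∀ v : V, ⁅S.K a, v⁆ = 0) := by
  let W : LieSubmodule ℂ L V :=
    { carrier := {v | ∀ a ∈ I, (∀ (n : ℤ) (x : g), ⁅S.E n x a, v⁆ = 0) ∧ ⁅S.K a, v⁆ = 0}
      add_mem' := fun hu hw a ha ↦ ⟨fun n x ↦ by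
        rw [lie_add, (hu a ha).1, (hw a ha).1, add_zero], by
        rw [lie_add, (hu a ha).2, (hw a ha).2, add_zero]⟩
      zero_mem' := by simp
      smul_mem' := fun c u hu a ha ↦ ⟨fun n x ↦ by rw [lie_smul, (hu a ha).1, smul_zero], by
        rw [lie_smul, (hu a ha).2, smul_zero]⟩
      lie_mem := by
        intro z u hu a ha
        have hK : ⁅S.K a, ⁅z, u⁆⁆ = 0 := by
          rw [lie_lie_of_eq (S.K_central a z), (hu a ha).2]
          simp
        refine ⟨fun n x ↦ ?_, hK⟩
        have hz : z ∈ (⊤ : Submodule ℂ L) := trivial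
        rw [← S.span_top] at hz
        clear hK
        induction hz using Submodule.span_induction with
        | mem z hz =>
          rcases hz with ((⟨m, y, b, rfl⟩ | ⟨m, b, rfl⟩) | ⟨b, rfl⟩) | ⟨b, rfl⟩
          · rw [lie_lie_of_eq (S.lie_EE n m x y a b), (hu a ha).1, add_lie, smul_lie,
              (hu _ (I.mul_mem_right b ha)).1, (hu _ (I.mul_mem_right b ha)).2]
            simp
          · rw [lie_lie_of_eq (lie_skew _ _).symm, S.lie_DE, (hu a ha).1, neg_lie, smul_lie,
              (hu _ (I.mul_mem_left b ha)).1]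
            simp
          · rw [lie_lie_of_eq (lie_skew _ _).symm, S.K_central, (hu a ha).1]
            simp
          · rw [lie_lie_of_eq (lie_skew _ _).symm, S.C_central, (hu a ha).1]
            simp
        | zero => simp
        | add y z _ _ hy hz => rw [add_lie, lie_add, hy, hz, add_zero]
        | smul c z _ hz => rw [smul_lie, lie_smul, hz, smul_zero] }
  have hvW : v ∈ W := hv
  have hW : W = ⊤ := (hIrr.eq_bot_or_eq_top W).resolve_left fun h ↦ hv0 (by
    rw [h] at hvW
    simpa using hvW)
  have hall : ∀ u : V, u ∈ W := fun u ↦ by rw [hW]; trivial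
  exact fun a ha ↦ ⟨fun n x u ↦ (hall u a ha).1 n x, fun u ↦ (hall u a ha).2⟩

variable (S V) in
/-- The Heisenberg part `(h̊ ⊗ ℂ[t,t⁻¹] ⊕ ℂK) ⊗ I` kills all vectors of weight `μ + ℤδ`. -/
def HeisKills (γ ν : ℂ) (I : Ideal A) (μ : Module.Dual ℂ S.H) : Prop :=
  ∀ a ∈ I, ∀ (m : ℤ), ∀ v ∈ S.layer V γ μ (ν + m),
    (∀ (n : ℤ) (h : S.H), ⁅S.E n h a, v⁆ = 0) ∧ ⁅S.K a, v⁆ = 0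

lemma HeisKills.mono {γ ν : ℂ} {I J : Ideal A} {μ : Module.Dual ℂ S.H}
    (h : S.HeisKills V γ ν I μ) (hJ : J ≤ I) : S.HeisKills V γ ν J μ :=
  fun a ha ↦ h a (hJ ha)

lemma E_mem_layer_int {x : g} {β : Module.Dual ℂ S.H} (hx : ∀ h : S.H, ⁅(h : g), x⁆ = β h • x)
    (n : ℤ) (a : A) {v : V} {γ ν : ℂ} {μ : Module.Dual ℂ S.H} {m : ℤ}
    (hv : v ∈ S.layer V γ μ (ν + m)) :
    ⁅S.E n x a, v⁆ ∈ S.layer V γ (μ + β) (ν + (m + n : ℤ)) := by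
  have := E_mem_layer hx n a hv
  rwa [add_assoc, ← Int.cast_add] at this

lemma D_mem_layer_int (k : ℤ) (b : A) {v : V} {γ ν : ℂ} {μ : Module.Dual ℂ S.H} {m : ℤ}
    (hv : v ∈ S.layer V γ μ (ν + m)) :
    ⁅S.D k b, v⁆ ∈ S.layer V γ μ (ν + (m + k : ℤ)) := by
  have := D_mem_layer k b hv
  rwa [add_assoc, ← Int.cast_add] at this

/-- The ideal of those `a` for which all `h ⊗ t ⊗ a` kill the vectors of weight `μ + ℤδ`. -/
def heisIdeal (S : LoopAffVir g A L) (V : Type*) [AddCommGroup V] [Module ℂ V] [LieRingModule L V]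
    [LieModule ℂ L V] (γ ν : ℂ) (μ : Module.Dual ℂ S.H) : Ideal A where
  carrier := {a | ∀ (m : ℤ), ∀ v ∈ S.layer V γ μ (ν + m), ∀ h : S.H, ⁅S.E 1 h a, v⁆ = 0}
  add_mem' := fun ha hb m v hv h ↦ by rw [map_add, add_lie, ha m v hv h, hb m v hv h, add_zero]
  zero_mem' := by simp
  smul_mem' := fun c a ha m v hv h ↦ by
    have h1 := lie_lie_of_eq (S.lie_DE 0 1 (h : g) c a) v
    rw [ha m v hv, ha _ _ (D_mem_layer_int 0 c hv)] at h1
    simpa using h1.symm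

variable {ι : Type*} (R : S.RootVectors ι)

include R in
lemma heisKills_heisIdeal (i : ι) (γ ν : ℂ) (μ : Module.Dual ℂ S.H) :
    S.HeisKills V γ ν (S.heisIdeal V γ ν μ) μ := by
  intro a ha m v hv
  obtain ⟨k, l, hkl⟩ := R.exists_form_ne_zero i
  have hE : ∀ (n : ℤ) (h : S.H) (m : ℤ), ∀ v ∈ S.layer V γ μ (ν + m), ⁅S.E n h a, v⁆ = 0 := by
    intro n h m v hv
    have h1 := lie_lie_of_eq (S.lie_DE (n - 1) 1 (h : g) 1 a) v
    rw [ha m v hv, ha _ _ (D_mem_layer_int (n - 1) 1 hv)] at h1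
    simpa using h1.symm
  refine ⟨fun n h ↦ hE n h m v hv, ?_⟩
  have h1 := lie_lie_of_eq (S.lie_EE 1 (-1) (k : g) (l : g) a 1) v
  have hl : ⁅S.E (-1) l 1, v⁆ ∈ S.layer V γ μ (ν + (m + (-1) : ℤ)) := by
    simpa using E_mem_layer_int (β := 0) (fun k ↦ by simp [R.lie_hh]) (-1) 1 hv
  rw [hE 1 k m v hv, hE 1 k _ _ hl, R.lie_hh] at h1
  simpa [hkl] using h1.symm

/-- The action of `h ⊗ t ⊗ a` between consecutive layers. -/
def layerAction (γ ν : ℂ) (μ : Module.Dual ℂ S.H) :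
    A →ₗ[ℂ] S.H →ₗ[ℂ] S.layer V γ μ ν →ₗ[ℂ] S.layer V γ μ (ν + (1 : ℤ)) where
  toFun a := LinearMap.mk₂ ℂ (fun h u ↦ ⟨⁅S.E 1 h a, (u : V)⁆, EH_mem_layer R.lie_hh h 1 a u.2⟩)
    (fun _ _ _ ↦ Subtype.ext (by simp)) (fun _ _ _ ↦ Subtype.ext (by simp))
    (fun _ _ _ ↦ Subtype.ext (by simp)) (fun _ _ _ ↦ Subtype.ext (by simp))
  map_add' _ _ := by
    ext
    simp
  map_smul' _ _ := by
    ext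
    simp

include R in
lemma isCofiniteIdeal_heisIdeal [FiniteDimensional ℂ g] (hInt : S.IsIntegrable V)
    (hK0 : ∀ v : V, ⁅S.K 1, v⁆ = 0) (γ ν : ℂ) {μ : Module.Dual ℂ S.H} (hμ : μ ≠ 0) :
    IsCofiniteIdeal (S.heisIdeal V γ ν μ) := by
  obtain ⟨i, hi⟩ : ∃ i, μ (R.h i) ≠ 0 := by
    by_contra! h
    exact hμ (LinearMap.ext_on_range R.span_h fun i ↦ by simp [h i])
  by_cases hbot : ∀ m : ℤ, S.layer V γ μ (ν + m) = ⊥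
  · convert isCofiniteIdeal_top (A := A)
    rw [eq_top_iff]
    intro a _ m v hv h
    rw [hbot] at hv
    rw [(Submodule.mem_bot ℂ).mp hv, lie_zero]
  push Not at hbot
  obtain ⟨m₀, hm₀⟩ := hbot
  obtain ⟨v₀, hv₀, hne⟩ := Submodule.exists_mem_ne_zero_of_ne_bot hm₀
  obtain ⟨z, hz⟩ : ∃ z : ℤ, μ (R.h i) = z := by
    refine LocallyNilpotent.exists_int_of_eigenvector (h := LieModule.toEnd ℂ L V (S.E 0 (R.h i) 1))
      ?_ ?_ ?_ (R.locNilp_x hInt i 0 1) (R.locNilp_y hInt i 0 1) (hv₀.1 (R.h i)) hne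
    · rw [RootVectors.toEnd_mul_sub, S.lie_E0_E, R.lie_xy, one_mul]
    · rw [RootVectors.toEnd_mul_sub, S.lie_E0_E, R.lie_hx, R.root_h, one_mul]
      simp
    · rw [RootVectors.toEnd_mul_sub, S.lie_E0_E, R.lie_hy, R.root_h, one_mul]
      simp
  have hz0 : z ≠ 0 := fun h ↦ hi (by simp [hz, h])
  have hfd := finiteDimensional_layer (S := S) hInt.2.1 hK0
  let W : Fin z.natAbs → Type _ := fun ρ ↦
    S.H →ₗ[ℂ] S.layer V γ μ (ν + (ρ : ℤ)) →ₗ[ℂ] S.layer V γ μ (ν + (ρ : ℤ) + (1 : ℤ))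
  let φ : A →ₗ[ℂ] ((ρ : Fin z.natAbs) → W ρ) :=
    LinearMap.pi fun ρ ↦ layerAction (V := V) R γ (ν + (ρ : ℤ)) μ
  refine isCofiniteIdeal_of_ker_le (W := (ρ : Fin z.natAbs) → W ρ) φ fun a ha m v hv h ↦ ?_
  refine R.kills_of_kills_translate hInt hK0 i (m / z) one_ne_zero a (fun h u hu ↦ ?_) h hv
  have hρ0 := Int.emod_nonneg m hz0
  have hρ := Int.emod_lt_abs m hz0
  obtain ⟨ρ, hρm⟩ := Int.eq_ofNat_of_zero_le hρ0
  rw [Int.abs_eq_natAbs] at hρ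
  have hlt : ρ < z.natAbs := by omega
  have hlayer : ν + (m : ℂ) - ((m / z : ℤ) : ℂ) * μ (R.h i) = ν + ((ρ : ℤ) : ℂ) := by
    have h1 : (m : ℂ) = ((ρ : ℤ) : ℂ) + ((z : ℤ) : ℂ) * ((m / z : ℤ) : ℂ) := by
      rw [← Int.ofNat_eq_natCast] at hρm ⊢
      rw [← hρm]
      exact_mod_cast (Int.emod_add_mul_ediv m z).symm
    rw [hz, h1]
    ring
  rw [hlayer] at hu
  have h1 := congrFun ha ⟨ρ, hlt⟩
  have h2 := LinearMap.congr_fun (LinearMap.congr_fun h1 h) ⟨u, hu⟩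
  exact congrArg Subtype.val h2

include R in
lemma exists_cofinite_heisKills [FiniteDimensional ℂ g] (hInt : S.IsIntegrable V)
    (hK0 : ∀ v : V, ⁅S.K 1, v⁆ = 0) (i : ι) (γ ν : ℂ) {T : Set (Module.Dual ℂ S.H)}
    (hT : T.Finite) :
    ∃ I : Ideal A, IsCofiniteIdeal I ∧ ∀ μ ∈ T, μ ≠ 0 → S.HeisKills V γ ν I μ := by
  induction T, hT using Set.Finite.induction_on with
  | empty => exact ⟨⊤, isCofiniteIdeal_top, by simp⟩
  | @insert μ T _ _ ih =>
    obtain ⟨I, hI, hIT⟩ := ih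
    by_cases hμ : μ = 0
    · exact ⟨I, hI, by rintro _ (rfl | h) h0; exacts [absurd hμ h0, hIT _ h h0]⟩
    · refine ⟨I ⊓ S.heisIdeal V γ ν μ, hI.inf (isCofiniteIdeal_heisIdeal R hInt hK0 γ ν hμ), ?_⟩
      rintro _ (rfl | h) h0
      · exact (heisKills_heisIdeal R i γ ν _).mono inf_le_right
      · exact (hIT _ h h0).mono inf_le_left

lemma HeisKills.E_eq_zero {γ ν : ℂ} {I : Ideal A} {μ β : Module.Dual ℂ S.H}
    (h0 : S.HeisKills V γ ν I μ) (h1 : S.HeisKills V γ ν I (μ + β)) {x : g}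
    (hx : ∀ h : S.H, ⁅(h : g), x⁆ = β h • x) {k : S.H} (hk : β k ≠ 0) (n : ℤ) {b : A}
    (hb : b ∈ I) {m : ℤ} {v : V} (hv : v ∈ S.layer V γ μ (ν + m)) : ⁅S.E n x b, v⁆ = 0 := by
  have h2 := lie_lie_of_eq (S.lie_E0_E n (k : g) x b 1) v
  rw [(h0 b hb m v hv).1, (h1 b hb _ _ (E_mem_layer_int hx n 1 hv)).1, hx] at h2
  simpa [hk] using h2.symm

lemma x_mul_eq_zero (hInt : S.IsIntegrable V) {γ ν : ℂ} {I : Ideal A} {μ : Module.Dual ℂ S.H}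
    (i : ι) (hμ : μ + R.root i = 0) (h0 : S.HeisKills V γ ν I μ)
    (h1 : S.HeisKills V γ ν I (μ - R.root i)) (n : ℤ) {b c : A} (hb : b ∈ I) (hc : c ∈ I)
    {m : ℤ} {v : V} (hv : v ∈ S.layer V γ μ (ν + m)) : ⁅S.E n (R.x i) (c * b), v⁆ = 0 := by
  have hy : ∀ h : S.H, ⁅(h : g), R.y i⁆ = (-R.root i) h • R.y i := fun h ↦ by
    simp [R.lie_hy]
  set u := ⁅S.E n (R.x i) b, v⁆ with hu
  have hul : u ∈ S.layer V γ 0 (ν + (m + n : ℤ)) := hμ ▸ E_mem_layer_int (R.lie_hx i) n b hv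
  have hyu : ∀ c : A, ⁅S.E 0 (R.y i) c, u⁆ = 0 := fun c ↦ by
    have hcb := h0 _ (I.mul_mem_left c hb) m v hv
    rw [hu, lie_lie_of_eq (S.lie_E0_E n _ _ c b), ← lie_skew, R.lie_xy, map_neg,
      LinearMap.neg_apply, neg_lie, hcb.1, neg_zero, zero_add]
    have hv' := E_mem_layer_int hy 0 c hv
    rw [← sub_eq_add_neg] at hv'
    exact h1.E_eq_zero (by rwa [sub_add_cancel]) (R.lie_hx i) (k := R.h i)
      (by rw [R.root_h]; exact two_ne_zero) n hb hv'
  have hxu : ⁅S.E 0 (R.x i) 1, u⁆ = 0 := by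
    by_cases hu0 : u = 0
    · rw [hu0, lie_zero]
    obtain ⟨k, hk, hk'⟩ := LocallyNilpotent.primitive_vector (r := 0)
      (e := LieModule.toEnd ℂ L V (S.E 0 (R.y i) 1)) (f := LieModule.toEnd ℂ L V (S.E 0 (R.x i) 1))
      (h := LieModule.toEnd ℂ L V (-S.E 0 (R.h i) 1))
      (by rw [RootVectors.toEnd_mul_sub, S.lie_E0_E, ← lie_skew, R.lie_xy]; simp)
      (by rw [RootVectors.toEnd_mul_sub, neg_lie, S.lie_E0_E, R.lie_hx, R.root_h]; simp)
      (by simpa using hul.1 (R.h i)) (hyu 1) hu0 (R.locNilp_x hInt i 0 1 u)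
    obtain rfl : k = 0 := by exact_mod_cast hk.symm
    simpa using hk'
  have hhu : ⁅S.E 0 (R.h i) c, u⁆ = 0 := by
    have h2 := lie_lie_of_eq (S.lie_E0_E 0 (R.x i) (R.y i) 1 c) u
    rw [hyu, hxu, R.lie_xy, one_mul] at h2
    simpa using h2.symm
  have h3 := lie_lie_of_eq (S.lie_E0_E n (R.h i : g) (R.x i) c b) v
  rw [← hu, hhu, (h0 c hc m v hv).1, R.lie_hx, R.root_h] at h3
  simpa using h3.symm

include R in
lemma RootVectors.E_apply_eq_zero {n : ℤ} {a : A} {v : V} (hh : ∀ h : S.H, ⁅S.E n h a, v⁆ = 0)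
    (hx : ∀ i, ⁅S.E n (R.x i) a, v⁆ = 0) (x : g) : ⁅S.E n x a, v⁆ = 0 := by
  have hxs : x ∈ Submodule.span ℂ ((S.H : Set g) ∪ Set.range R.x) := by
    have h1 : x ∈ S.H.toSubmodule ⊔ Submodule.span ℂ (Set.range R.x) := R.span_x ▸ trivial
    have h2 : S.H.toSubmodule ≤ Submodule.span ℂ (S.H : Set g) := fun _ h ↦
      Submodule.subset_span h
    rw [Submodule.span_union]
    exact sup_le_sup_right h2 _ h1
  refine E_apply_eq_zero_of_mem_span ?_ hxs
  rintro y (hy | ⟨i, rfl⟩)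
  exacts [hh ⟨y, hy⟩, hx i]

include R in
/-- A module on which `h̊ ⊗ 1` acts trivially is killed by `g' ⊗ A`. -/
lemma kills_of_cartan_kills [LieAlgebra.IsSimple ℂ g] (hH : ∀ (h : S.H) (v : V), ⁅S.E 0 h 1, v⁆ = 0)
    (a : A) : (∀ (n : ℤ) (x : g) (v : V), ⁅S.E n x a, v⁆ = 0) ∧ (∀ v : V, ⁅S.K a, v⁆ = 0) := by
  have hx : ∀ (i : ι) (n : ℤ) (a : A) (v : V), ⁅S.E n (R.x i) a, v⁆ = 0 := fun i n a v ↦ by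
    have h1 := lie_lie_of_eq (S.lie_E0_E n (R.h i : g) (R.x i) 1 a) v
    rw [hH, hH, R.lie_hx, R.root_h] at h1
    simpa using h1.symm
  have hh : ∀ (n : ℤ) (h : S.H) (v : V), ⁅S.E n h a, v⁆ = 0 := fun n h v ↦ by
    have hh : (h : g) ∈ Submodule.span ℂ (Set.range fun i ↦ (R.h i : g)) := by
      have h1 : h ∈ Submodule.span ℂ (Set.range R.h) := R.span_h ▸ trivial
      have h2 := Submodule.mem_map_of_mem (f := S.H.toSubmodule.subtype) h1
      rwa [Submodule.map_span, ← Set.range_comp] at h2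
    refine E_apply_eq_zero_of_mem_span ?_ hh
    rintro _ ⟨i, rfl⟩
    have h1 := lie_lie_of_eq (S.lie_EE n 0 (R.x i) (R.y i) a 1) v
    rw [hx, hx, R.lie_xy] at h1
    by_cases hn : n = 0 <;> simpa [hn, eq_comm] using h1
  have hE : ∀ (n : ℤ) (x : g) (v : V), ⁅S.E n x a, v⁆ = 0 := fun n x v ↦
    R.E_apply_eq_zero (fun h ↦ hh n h v) (fun i ↦ hx i n a v) x
  refine ⟨hE, fun v ↦ ?_⟩
  obtain ⟨x, y, hxy⟩ : ∃ x y, S.form x y ≠ 0 := by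
    by_contra! h
    exact LieAlgebra.IsSimple.non_abelian ℂ (L := g) ⟨fun x y ↦ S.form_nondeg _ fun z ↦ h _ _⟩
  have h1 := lie_lie_of_eq (S.lie_EE 1 (-1) x y a 1) v
  rw [hE, hE] at h1
  have h2 := hE 0 ⁅x, y⁆ v
  simpa [hxy, h2] using h1.symm

end LoopAffVir

namespace LoopAffVir

variable {g A L : Type*} [LieRing g] [LieAlgebra ℂ g] [CommRing A] [Algebra ℂ A]
  [LieRing L] [LieAlgebra ℂ L] {S : LoopAffVir g A L}
  {V : Type*} [AddCommGroup V] [Module ℂ V] [LieRingModule L V] [LieModule ℂ L V]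
  {ι : Type*} (R : S.RootVectors ι)

include R in
/-- If some weight of `V` is nonzero on `h̊`, then `g' ⊗ I` kills a weight vector for some
cofinite ideal `I`. -/
lemma exists_cofinite_kills_vector [FiniteDimensional ℂ g] [Algebra.FiniteType ℂ A] [Finite ι]
    (hInt : S.IsIntegrable V) (hK0 : ∀ v : V, ⁅S.K 1, v⁆ = 0) {γ ν : ℂ}
    {μ : Module.Dual ℂ S.H} (hμ : μ ≠ 0) {v : V} (hv : v ∈ S.layer V γ μ ν) :
    ∃ I : Ideal A, IsCofiniteIdeal I ∧
      ∀ a ∈ I, (∀ (n : ℤ) (x : g), ⁅S.E n x a, v⁆ = 0) ∧ ⁅S.K a, v⁆ = 0 := by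
  obtain ⟨i, -⟩ : ∃ i, μ (R.h i) ≠ 0 := by
    by_contra! h
    exact hμ (LinearMap.ext_on_range R.span_h fun i ↦ by simp [h i])
  have hT : (insert μ (Set.range (fun j ↦ μ + R.root j) ∪
      Set.range fun j ↦ μ - R.root j)).Finite :=
    ((Set.finite_range _).union (Set.finite_range _)).insert μ
  obtain ⟨I, hI, hIT⟩ := exists_cofinite_heisKills R hInt hK0 i γ ν hT
  have hv' : v ∈ S.layer V γ μ (ν + (0 : ℤ)) := by simpa using hv
  have h0 : S.HeisKills V γ ν I μ := hIT μ (Set.mem_insert _ _) hμ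
  refine ⟨I * I, hI.mul_self, fun a ha ↦ ?_⟩
  have haI : a ∈ I := Ideal.mul_le_left ha
  refine ⟨fun n ↦ R.E_apply_eq_zero (fun h ↦ (h0 a haI 0 v hv').1 n h) fun j ↦ ?_,
    (h0 a haI 0 v hv').2⟩
  have hj : R.root j (R.h j) ≠ 0 := by
    rw [R.root_h]
    exact two_ne_zero
  by_cases hμj : μ + R.root j = 0
  · have hsub : μ - R.root j ≠ 0 := fun h ↦ by
      have h1 := LinearMap.congr_fun hμj (R.h j)
      have h2 := LinearMap.congr_fun h (R.h j)
      simp only [LinearMap.add_apply, LinearMap.sub_apply, LinearMap.zero_apply] at h1 h2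
      exact hj (by linear_combination (h1 - h2) / 2)
    have h1 := hIT _ (Set.mem_insert_of_mem _ (Or.inr ⟨j, rfl⟩)) hsub
    induction ha using Submodule.mul_induction_on' with
    | mem_mul_mem b hb c hc => exact x_mul_eq_zero R hInt j hμj h0 h1 n hc hb hv'
    | add b hb c hc hb' hc' =>
      rw [map_add, add_lie, hb' (Ideal.mul_le_left hb), hc' (Ideal.mul_le_left hc), add_zero]
  · exact h0.E_eq_zero (hIT _ (Set.mem_insert_of_mem _ (Or.inl ⟨j, rfl⟩)) hμj) (R.lie_hx j) hj n
      haI hv'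

end LoopAffVir

/-- Proposition `p4`.  Let `V` be an irreducible integrable
`𝔏(A)`-module with finite dimensional weight spaces on which `K ⊗ 1` acts trivially.
Then there is a cofinite ideal `I` of `A` with `(g' ⊗ I) ⬝ V = 0`,
where `g' = g̊ ⊗ ℂ[t,t⁻¹] ⊕ ℂK`. -/
theorem statement14
    {g A L : Type*} [LieRing g] [LieAlgebra ℂ g] [FiniteDimensional ℂ g]
    [LieAlgebra.IsSimple ℂ g]
    [CommRing A] [Algebra ℂ A] [Algebra.FiniteType ℂ A]
    [LieRing L] [LieAlgebra ℂ L]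
    (S : LoopAffVir g A L)
    (V : Type*) [AddCommGroup V] [Module ℂ V] [LieRingModule L V] [LieModule ℂ L V]
    (hIrr : IsSimpleOrder (LieSubmodule ℂ L V))
    (hInt : S.IsIntegrable V)
    (hK0 : ∀ v : V, ⁅S.K 1, v⁆ = 0)
    :
    ∃ I : Ideal A, IsCofiniteIdeal I ∧ ∀ a ∈ I,
      (∀ (n : ℤ) (x : g) (v : V), ⁅S.E n x a, v⁆ = 0) ∧ (∀ v : V, ⁅S.K a, v⁆ = 0) := by
  obtain ⟨ι, hfin, ⟨R⟩⟩ := S.exists_rootVectors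
  by_cases hw : ∃ χ, S.wtSpace V χ ≠ ⊥ ∧ ∃ h : S.H, χ (S.eH h) ≠ 0
  · obtain ⟨χ, hχ, h, hh⟩ := hw
    obtain ⟨v, hv, hv0⟩ := Submodule.exists_mem_ne_zero_of_ne_bot hχ
    let μ : Module.Dual ℂ S.H :=
      { toFun := fun k ↦ χ (S.eH k)
        map_add' := fun k l ↦ by
          rw [← map_add]
          exact congrArg χ (Subtype.ext (by simp [LoopAffVir.eH]))
        map_smul' := fun c k ↦ by
          rw [RingHom.id_apply, ← map_smul]
          exact congrArg χ (Subtype.ext (by simp [LoopAffVir.eH])) }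
    have hμ : μ ≠ 0 := fun h0 ↦ hh (LinearMap.congr_fun h0 h)
    have hvl : v ∈ S.layer V (χ S.C1) μ (χ S.d0) := ⟨fun k ↦ hv (S.eH k), hv S.d0, hv S.C1⟩
    obtain ⟨I, hI, hIv⟩ := LoopAffVir.exists_cofinite_kills_vector R hInt hK0 hμ hvl
    exact ⟨I, hI, LoopAffVir.kills_of_kills_vector hIrr hv0 hIv⟩
  · push Not at hw
    have hH : ∀ (h : S.H) (v : V), ⁅S.E 0 h 1, v⁆ = 0 := fun h v ↦ by
      have hle : (⨆ χ, S.wtSpace V χ) ≤ LinearMap.ker (LieModule.toEnd ℂ L V (S.E 0 h 1)) :=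
        iSup_le fun χ u hu ↦ by
          by_cases hχ : S.wtSpace V χ = ⊥
          · rw [hχ] at hu
            simp [(Submodule.mem_bot ℂ).mp hu]
          · have h1 : ⁅S.E 0 h 1, u⁆ = χ (S.eH h) • u := hu (S.eH h)
            rw [hw χ hχ, zero_smul] at h1
            exact h1
      have hv : v ∈ (⨆ χ, S.wtSpace V χ) := by
        have h1 : (⨆ χ, S.wtSpace V χ) = ⊤ := hInt.1
        rw [h1]
        trivial
      exact hle hv
    exact ⟨⊤, isCofiniteIdeal_top, fun a _ ↦ LoopAffVir.kills_of_cartan_kills R hH a⟩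
end
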